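/- arXiv:2508.12521 — 4 statements merged into one kernel-verified Lean document; each statement's English description precedes it below -/
import Mathlib

section
/- Let n ≥ 1 and for each Dyck path π of semilength n let X(π) = ((d_1,a_1),…,(d_n,a_n)) be the tuple of (dinv, area) pairs of π. Then the family of images in DR_n of the bivariate Vandermonde determinants Δ_{X(π)}(x,y), as π ranges over all Dyck paths of semilength n, forms a ℂ-vector-space basis of the ideal A of DR_n generated by the alternating polynomials. -/
open MvPolynomial

/-- The area sequence of a Dyck path of semilength `n`: a tuple
`a : Fin n → ℕ` with first entry zero and `a (i+1) ≤ a i + 1`. -/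
def IsDyckArea {n : ℕ} (a : Fin n → ℕ) : Prop :=
  (∀ i : Fin n, (i : ℕ) = 0 → a i = 0) ∧
  (∀ i j : Fin n, (j : ℕ) = (i : ℕ) + 1 → a j ≤ a i + 1)

/-- The dinv sequence of a Dyck path encoded by its area sequence:
`d i = #{ j > i | a j = a i or a j = a i - 1 }`. -/
def dinvSeq {n : ℕ} (a : Fin n → ℕ) (i : Fin n) : ℕ :=
  (Finset.univ.filter (fun j : Fin n => i < j ∧ (a j = a i ∨ a j + 1 = a i))).card

/-- The bivariate Vandermonde determinant `Δ_X(x,y) = det (x_i^{α_j} y_i^{β_j})`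
for a tuple `X = ((α_1,β_1),…,(α_n,β_n))`, a polynomial in
`ℂ[x_1,…,x_n,y_1,…,y_n]` where `x i = X (Sum.inl i)` and `y i = X (Sum.inr i)`. -/
noncomputable def biVandermonde (n : ℕ) (E : Fin n → ℕ × ℕ) :
    MvPolynomial (Fin n ⊕ Fin n) ℂ :=
  Matrix.det (Matrix.of fun i j : Fin n =>
    (X (Sum.inl i) : MvPolynomial (Fin n ⊕ Fin n) ℂ) ^ (E j).1 *
      (X (Sum.inr i) : MvPolynomial (Fin n ⊕ Fin n) ℂ) ^ (E j).2)

/-- The ideal of `ℂ[x_1,…,x_n,y_1,…,y_n]` generated by all polynomials that are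
invariant under the diagonal `S_n`-action (permuting the `x` and `y` variables
simultaneously) and have zero constant term.  The diagonal coinvariant ring
`DR_n` is the quotient by this ideal. -/
noncomputable def invIdeal (n : ℕ) : Ideal (MvPolynomial (Fin n ⊕ Fin n) ℂ) :=
  Ideal.span {f | (∀ σ : Equiv.Perm (Fin n), rename (Sum.map σ σ) f = f) ∧
    constantCoeff f = 0}

/-- A polynomial is alternating if `σ · f = sign σ • f` for every `σ ∈ S_n`
acting diagonally. -/
def IsAltPoly (n : ℕ) (f : MvPolynomial (Fin n ⊕ Fin n) ℂ) : Prop :=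
  ∀ σ : Equiv.Perm (Fin n),
    rename (Sum.map σ σ) f = (Equiv.Perm.sign σ : ℤ) • f

/-- The ideal `A` of the diagonal coinvariant ring `DR_n` generated by the
images of all alternating polynomials. -/
noncomputable def altIdeal (n : ℕ) :
    Ideal (MvPolynomial (Fin n ⊕ Fin n) ℂ ⧸ invIdeal n) :=
  Ideal.span ((Ideal.Quotient.mk (invIdeal n)) '' {f | IsAltPoly n f})

/-! Modulo `invIdeal n` every `x_i` and every `y_i` annihilates the alternating polynomials, because
power sums transfer exponents from one pair of variables to another. Hence `A` is the `ℂ`-span of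
the images of the bivariate Vandermonde determinants.

*Spanning.* Fix the `y`-exponents `l` of a monomial. As a `ℂ`-vector space, `ℂ[x]` is spanned by the
monomials in a box determined by `l`, an ideal generated by power sums attached to the levels of
`l`, and the polynomials invariant under a swap of `x_i` and `x_j` with `l i = l j`; this is shown
by deletion and contraction of a variable. After multiplication by `y^l` and antisymmetrization, the
swap-invariant polynomials vanish, the level sums reduce modulo `invIdeal n` to alternating
polynomials with smaller `∑ k, l k ^ 2`, and the box monomials with distinct exponent pairs give
exactly the determinants of Dyck paths.

*Independence.* Let `Θ` be the linear map which substitutes `x = (0, …, n - 1)` and sends `y^d` to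
`∏ i, v_{i + d_i}`, where `v_m = 0` for `m ≥ n`. If `u` is a permutation of `(0, …, n - 1)` and
`δ ∈ ℕ^n` is nonzero, then `u + δ` has a repeated entry or an entry `≥ n`, so the analogous map at
`x = u + δ` kills alternating polynomials. It follows that `Θ` sends each `x`-homogeneous component
of an alternating element of `invIdeal n` to the value of an alternating polynomial of lower
`x`-degree. By induction on the `x`-degree, the images under `Θ` of a family of determinants
spanning `A` span all values of `Θ` at alternating polynomials. These values include a different
monomial in the `v_m` for every Dyck path, so a spanning subfamily of the Dyck path determinants
cannot be proper. -/

noncomputable section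

section Monomials

variable {τ R : Type*} [CommSemiring R]

theorem prod_X_mul_monomial (W : Finset τ) (α : τ →₀ ℕ) :
    (∏ i ∈ W, X i) * monomial α (1 : R) = monomial (∑ i ∈ W, Finsupp.single i 1 + α) 1 := by
  have h : (∏ i ∈ W, X i : MvPolynomial τ R) = monomial (∑ i ∈ W, Finsupp.single i 1) 1 := by
    rw [monomial_sum_one]; rfl
  rw [h, monomial_mul, one_mul]

theorem sum_single_one_apply [DecidableEq τ] (W : Finset τ) (k : τ) :
    (∑ i ∈ W, Finsupp.single i 1 : τ →₀ ℕ) k = if k ∈ W then 1 else 0 := by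
  simp [Finsupp.finsetSum_apply, Finsupp.single_apply]

theorem exists_monomial_eq_prod_X_mul {W : Finset τ} {α : τ →₀ ℕ} (h : ∀ i ∈ W, α i ≠ 0) :
    ∃ f : MvPolynomial τ R, monomial α 1 = (∏ i ∈ W, X i) * f := by
  classical
  refine ⟨monomial (α - ∑ i ∈ W, Finsupp.single i 1) 1, ?_⟩
  rw [prod_X_mul_monomial, add_tsub_cancel_of_le]
  intro k
  rw [sum_single_one_apply]
  split_ifs with hk
  · exact Nat.one_le_iff_ne_zero.2 (h k hk)
  · exact Nat.zero_le _

theorem eq_top_of_monomial_mem {V : Submodule R (MvPolynomial τ R)}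
    (h : ∀ α, monomial α 1 ∈ V) : V = ⊤ := by
  rw [eq_top_iff, ← (basisMonomials τ R).span_eq, Submodule.span_le]
  rintro _ ⟨α, rfl⟩
  simpa using h α

variable [DecidableEq τ]

theorem rename_swap_prod_X {W : Finset τ} {i j : τ} (h : i ∈ W ↔ j ∈ W) :
    rename (Equiv.swap i j) (∏ k ∈ W, X k : MvPolynomial τ R) = ∏ k ∈ W, X k := by
  simp only [map_prod, rename_X]
  refine Finset.prod_equiv (Equiv.swap i j) (fun k => ?_) (fun _ _ => rfl)
  rw [Equiv.swap_apply_def]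
  split_ifs with hki hkj
  · rwa [hki]
  · rw [hkj, h]
  · rfl

theorem rename_swap_monomial {α : τ →₀ ℕ} {i j : τ} (h : α i = α j) (r : R) :
    rename (Equiv.swap i j) (monomial α r) = monomial α r := by
  suffices Finsupp.mapDomain (Equiv.swap i j) α = α by rw [rename_monomial, this]
  ext k
  rw [Finsupp.mapDomain_equiv_apply, Equiv.symm_swap, Equiv.swap_apply_def]
  split_ifs with hki hkj
  · rw [hki, h]
  · rw [hkj, h]
  · rfl

end Monomials

namespace Levels

section CommRing

variable {τ R : Type*} [CommRing R]

/-- The number of indices in `s` whose level is `b` or `b - 1`, where `l` assigns levels. -/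
def adjCount (l : τ → ℕ) (s : Finset τ) (b : ℕ) : ℕ :=
  (s.filter fun k => l k = b ∨ l k + 1 = b).card

/-- The box of exponents used in the deletion–contraction argument: at a point `i` of level at
least `H`, the exponent is less than the number of other points of level `l i` or `l i - 1`; below
`H` one more is allowed. -/
def InBox (l : τ → ℕ) (H : ℕ) (s : Finset τ) (α : τ → ℕ) : Prop :=
  ∀ i ∈ s, α i + 1 < adjCount l s (l i) + if l i < H then 1 else 0

/-- The level sum `∑_{l i ≥ a} g(X_i) ∏_{l k = a - 1} (X_i - X_k)`, linear in `g`. -/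
def levelSum (l : τ → ℕ) (s : Finset τ) (a : ℕ) :
    Polynomial (MvPolynomial τ R) →ₗ[MvPolynomial τ R] MvPolynomial τ R :=
  ∑ i ∈ s with a ≤ l i, (∏ k ∈ s with l k + 1 = a, (X i - X k : MvPolynomial τ R)) •
    Polynomial.leval (X i : MvPolynomial τ R)

variable (R) in
/-- The ideal generated by the level sums of powers `X ^ u`, with `u ≥ 1` for levels `a < H`. -/
def levelIdeal (l : τ → ℕ) (H : ℕ) (s : Finset τ) : Ideal (MvPolynomial τ R) :=
  Ideal.span {f | ∃ a u, (a < H → 1 ≤ u) ∧ levelSum l s a (Polynomial.X ^ u) = f}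

theorem levelSum_apply (l : τ → ℕ) (s : Finset τ) (a : ℕ) (g : Polynomial (MvPolynomial τ R)) :
    levelSum l s a g =
      ∑ i ∈ s with a ≤ l i, (∏ k ∈ s with l k + 1 = a, (X i - X k)) * g.eval (X i) := by
  simp [levelSum, Polynomial.leval_apply]

theorem levelSum_X_pow_mem {l : τ → ℕ} {H : ℕ} {s : Finset τ} {a u : ℕ} (h : a < H → 1 ≤ u) :
    levelSum l s a (Polynomial.X ^ u) ∈ levelIdeal R l H s :=
  Ideal.subset_span ⟨a, u, h, rfl⟩

theorem levelSum_X_pow_mul_mem {l : τ → ℕ} {H : ℕ} {s : Finset τ} {a v : ℕ} (h : a < H → 1 ≤ v)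
    (g : Polynomial (MvPolynomial τ R)) :
    levelSum l s a (Polynomial.X ^ v * g) ∈ levelIdeal R l H s := by
  induction g using Polynomial.induction_on' with
  | add p q hp hq => rw [mul_add, map_add]; exact Ideal.add_mem _ hp hq
  | monomial n c =>
    rw [← Polynomial.C_mul_X_pow_eq_monomial, mul_left_comm, ← pow_add, ← Polynomial.smul_eq_C_mul,
      map_smul]
    exact Ideal.mul_mem_left _ _ (levelSum_X_pow_mem fun ha => Nat.le_add_right_of_le (h ha))

theorem levelSum_succ_prod (l : τ → ℕ) (H : ℕ) (s : Finset τ) :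
    levelSum l s (H + 1) (∏ v ∈ s with l v + 1 = H, (.X - .C (X v))) =
      levelSum (R := R) l s H (∏ v ∈ s with l v = H, (.X - .C (X v))) := by
  simp only [levelSum_apply, Polynomial.eval_prod, Polynomial.eval_sub, Polynomial.eval_X,
    Polynomial.eval_C, add_left_inj]
  have hsub : (s.filter fun i => H + 1 ≤ l i) ⊆ s.filter fun i => H ≤ l i :=
    Finset.monotone_filter_right _ fun _ _ => Nat.le_of_succ_le
  rw [← Finset.sum_subset hsub]
  · exact Finset.sum_congr rfl fun i _ => mul_comm _ _
  · intro i hi hi'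
    simp only [Finset.mem_filter, not_and, not_le] at hi hi'
    have hil : i ∈ s.filter fun v => l v = H :=
      Finset.mem_filter.2 ⟨hi.1, le_antisymm (Nat.lt_succ_iff.1 (hi' hi.1)) hi.2⟩
    rw [Finset.prod_eq_zero hil (sub_self _), mul_zero]

/-- The constant coefficient of `∏ (X - X_v)` in `levelSum_succ_prod` is the product of the `X_v` up
to sign, and the other coefficients only contribute level sums of positive powers. -/
theorem prod_X_mul_levelSum_one_mem (l : τ → ℕ) (H : ℕ) (s : Finset τ) :
    (∏ i ∈ s with l i = H, X i) * levelSum l s H 1 ∈ levelIdeal R l (H + 1) s := by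
  have hsucc := levelSum_succ_prod (R := R) l H s
  generalize hP : (∏ v ∈ s with l v = H, (.X - .C (X v)) : Polynomial (MvPolynomial τ R)) = P
    at hsucc
  have hcoeff : P.coeff 0 =
      (-1) ^ (s.filter fun i => l i = H).card * ∏ i ∈ s with l i = H, X i := by
    rw [Polynomial.coeff_zero_eq_eval_zero, ← hP, Polynomial.eval_prod]
    simp [Finset.prod_neg]
  have hsplit : levelSum l s H P =
      levelSum l s H (.X ^ 1 * P.divX) + P.coeff 0 * levelSum l s H 1 := by
    rw [← smul_eq_mul (P.coeff 0), ← map_smul, ← map_add, Polynomial.smul_eq_C_mul, mul_one,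
      pow_one, Polynomial.X_mul_divX_add]
  have hmem : P.coeff 0 * levelSum l s H 1 ∈ levelIdeal R l (H + 1) s := by
    rw [← sub_eq_of_eq_add' hsplit, ← hsucc]
    refine Ideal.sub_mem _ ?_ (levelSum_X_pow_mul_mem (fun _ => le_rfl) _)
    rw [← one_mul (∏ v ∈ s with l v + 1 = H, _), ← pow_zero Polynomial.X]
    exact levelSum_X_pow_mul_mem (by simp) _
  rw [hcoeff] at hmem
  have := Ideal.mul_mem_left _ ((-1) ^ (s.filter fun i => l i = H).card) hmem
  rwa [← mul_assoc, ← mul_assoc, ← mul_pow, neg_one_mul, neg_neg, one_pow, one_mul] at this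

variable [DecidableEq τ]

variable (R) in
/-- The span of the box monomials, the level ideal, and the polynomials fixed by a transposition
of two indices of equal level. -/
def levelSpan (l : τ → ℕ) (H : ℕ) (s : Finset τ) : Submodule R (MvPolynomial τ R) :=
  Submodule.span R ((fun α => monomial α 1) '' {α : τ →₀ ℕ | InBox l H s α}) ⊔
  (levelIdeal R l H s).restrictScalars R ⊔
  Submodule.span R {f | ∃ i ∈ s, ∃ j ∈ s, i ≠ j ∧ l i = l j ∧ rename (Equiv.swap i j) f = f}

theorem adjCount_erase (l : τ → ℕ) {s : Finset τ} {i : τ} (hi : i ∈ s) (b : ℕ) :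
    adjCount l (s.erase i) b + (if l i = b ∨ l i + 1 = b then 1 else 0) = adjCount l s b := by
  simp only [adjCount]
  rw [Finset.filter_erase]
  split_ifs with h
  · exact Finset.card_erase_add_one (Finset.mem_filter.2 ⟨hi, h⟩)
  · rw [Finset.erase_eq_of_notMem (by simp [h]), add_zero]

section Span

variable {l : τ → ℕ} {H : ℕ} {s : Finset τ}

theorem monomial_mem_levelSpan {α : τ →₀ ℕ} (h : InBox l H s α) :
    monomial α 1 ∈ levelSpan R l H s :=
  Submodule.mem_sup_left (Submodule.mem_sup_left (Submodule.subset_span ⟨α, h, rfl⟩))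

theorem mem_levelSpan_of_mem_levelIdeal {f : MvPolynomial τ R} (h : f ∈ levelIdeal R l H s) :
    f ∈ levelSpan R l H s :=
  Submodule.mem_sup_left (Submodule.mem_sup_right h)

theorem mem_levelSpan_of_swap {f : MvPolynomial τ R} {i j : τ} (hi : i ∈ s) (hj : j ∈ s)
    (hij : i ≠ j) (hl : l i = l j) (h : rename (Equiv.swap i j) f = f) :
    f ∈ levelSpan R l H s :=
  Submodule.mem_sup_right (Submodule.subset_span ⟨i, hi, j, hj, hij, hl, h⟩)

theorem levelSpan_le {T : Submodule R (MvPolynomial τ R)}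
    (hbox : ∀ α : τ →₀ ℕ, InBox l H s α → monomial α 1 ∈ T)
    (hsum : ∀ q a u, (a < H → 1 ≤ u) → q * levelSum l s a (Polynomial.X ^ u) ∈ T)
    (hswap : ∀ f, ∀ i ∈ s, ∀ j ∈ s, i ≠ j → l i = l j → rename (Equiv.swap i j) f = f → f ∈ T) :
    levelSpan R l H s ≤ T := by
  refine sup_le (sup_le ?_ ?_) ?_
  · rw [Submodule.span_le]
    rintro _ ⟨α, hα, rfl⟩
    exact hbox α hα
  · intro f hf
    suffices ∀ q, q * f ∈ T by simpa using this 1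
    refine Submodule.span_induction ?_ (by simp) ?_ ?_ hf
    · rintro _ ⟨a, u, h, rfl⟩ q
      exact hsum q a u h
    · intro f g _ _ hf hg q
      rw [mul_add]
      exact T.add_mem (hf q) (hg q)
    · intro r f _ hf q
      rw [smul_eq_mul, ← mul_assoc]
      exact hf _
  · rw [Submodule.span_le]
    rintro f ⟨i, hi, j, hj, hij, hl, hf⟩
    exact hswap f i hi j hj hij hl hf

end Span

theorem prod_X_mul_mem_levelSpan_succ (l : τ → ℕ) (H : ℕ) (s : Finset τ) {f : MvPolynomial τ R}
    (hf : f ∈ levelSpan R l H s) :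
    (∏ i ∈ s with l i = H, X i) * f ∈ levelSpan R l (H + 1) s := by
  suffices h : levelSpan R l H s ≤ (levelSpan R l (H + 1) s).comap
      (LinearMap.mulLeft R (∏ i ∈ s with l i = H, X i)) from h hf
  refine levelSpan_le (fun α hα => ?_) (fun q a u h => ?_) fun f i hi j hj hij hl hf => ?_ <;>
    rw [Submodule.mem_comap, LinearMap.mulLeft_apply]
  · rw [prod_X_mul_monomial]
    refine monomial_mem_levelSpan fun i hi => ?_
    have := hα i hi
    rw [Finsupp.add_apply, sum_single_one_apply]
    simp only [Finset.mem_filter, hi, true_and]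
    split_ifs at this ⊢ <;> omega
  · refine mem_levelSpan_of_mem_levelIdeal ?_
    by_cases hau : a < H + 1 → 1 ≤ u
    · exact Ideal.mul_mem_left _ _ (Ideal.mul_mem_left _ _ (levelSum_X_pow_mem hau))
    · obtain ⟨rfl, rfl⟩ : a = H ∧ u = 0 := by omega
      rw [mul_left_comm, pow_zero]
      exact Ideal.mul_mem_left _ _ (prod_X_mul_levelSum_one_mem l a s)
  · refine mem_levelSpan_of_swap hi hj hij hl ?_
    rw [map_mul, hf, rename_swap_prod_X (by simp [hi, hj, hl])]

section Deletion

variable {l : τ → ℕ} {s : Finset τ} {i : τ}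

theorem levelSum_erase_of_le (hi : i ∈ s) {a : ℕ} (ha : a ≤ l i)
    (g : Polynomial (MvPolynomial τ R)) :
    levelSum l (s.erase i) a g =
      levelSum l s a g - (∏ k ∈ s with l k + 1 = a, (X i - X k)) * g.eval (X i) := by
  have hprod : (s.erase i).filter (fun k => l k + 1 = a) = s.filter (fun k => l k + 1 = a) := by
    rw [Finset.filter_erase, Finset.erase_eq_of_notMem (by simp; omega)]
  rw [levelSum_apply, levelSum_apply, hprod, Finset.filter_erase, eq_sub_iff_add_eq,
    Finset.sum_erase_add _ _ (Finset.mem_filter.2 ⟨hi, ha⟩)]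

theorem levelSum_succ_eq_erase (hi : i ∈ s) (g : Polynomial (MvPolynomial τ R)) :
    levelSum l s (l i + 1) g = levelSum l (s.erase i) (l i + 1) (.X * g) -
      X i * levelSum l (s.erase i) (l i + 1) g := by
  have hsum : (s.erase i).filter (fun k => l i + 1 ≤ l k) = s.filter (fun k => l i + 1 ≤ l k) := by
    rw [Finset.filter_erase, Finset.erase_eq_of_notMem (by simp)]
  have hi' : i ∈ s.filter fun k => l k + 1 = l i + 1 := Finset.mem_filter.2 ⟨hi, rfl⟩
  simp only [levelSum_apply, hsum, Finset.mul_sum, ← Finset.sum_sub_distrib, Polynomial.eval_mul,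
    Polynomial.eval_X, Finset.filter_erase, ← Finset.mul_prod_erase _ _ hi']
  exact Finset.sum_congr rfl fun k _ => by ring

theorem levelSum_erase_of_lt {a : ℕ} (ha : l i + 1 < a) :
    levelSum (R := R) l (s.erase i) a = levelSum l s a := by
  have hsum : (s.erase i).filter (fun k => a ≤ l k) = s.filter (fun k => a ≤ l k) := by
    rw [Finset.filter_erase, Finset.erase_eq_of_notMem (by simp; omega)]
  have hprod : (s.erase i).filter (fun k => l k + 1 = a) = s.filter (fun k => l k + 1 = a) := by
    rw [Finset.filter_erase, Finset.erase_eq_of_notMem (by simp; omega)]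
  simp only [levelSum, hsum, hprod]

theorem exists_levelSum_erase_eq_add (hi : i ∈ s) {a u : ℕ} (h : a < l i + 2 → 1 ≤ u) :
    ∃ f ∈ levelIdeal R l (l i + 1) s, ∃ r,
      levelSum l (s.erase i) a (Polynomial.X ^ u) = f + X i * r := by
  rcases lt_trichotomy a (l i + 1) with ha | rfl | ha
  · obtain ⟨v, rfl⟩ := Nat.exists_eq_add_of_le' (h (by omega))
    refine ⟨_, levelSum_X_pow_mem (a := a) (u := v + 1) (by omega),
      -((∏ k ∈ s with l k + 1 = a, (X i - X k)) * X i ^ v), ?_⟩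
    rw [levelSum_erase_of_le hi (by omega), Polynomial.eval_pow, Polynomial.eval_X]
    ring
  · obtain ⟨v, rfl⟩ := Nat.exists_eq_add_of_le' (h (by omega))
    refine ⟨_, levelSum_X_pow_mem (a := l i + 1) (u := v) (by omega),
      levelSum l (s.erase i) (l i + 1) (Polynomial.X ^ v), ?_⟩
    rw [levelSum_succ_eq_erase hi, ← pow_succ', sub_add_cancel]
  · exact ⟨_, levelSum_X_pow_mem (a := a) (u := u) (by omega), 0,
      by rw [levelSum_erase_of_lt ha, mul_zero, add_zero]⟩

theorem InBox.add_of_erase {α : τ →₀ ℕ} (hi : i ∈ s) (hα : InBox l (l i + 2) (s.erase i) α)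
    (h0 : α i = 0) :
    InBox l (l i + 1) s
      (∑ k ∈ s.erase i with l k = l i, Finsupp.single k 1 + α : τ →₀ ℕ) := by
  intro j hj
  have hcard := adjCount_erase l hi (l j)
  rw [Finsupp.add_apply, sum_single_one_apply]
  rcases eq_or_ne j i with rfl | hji
  · simp only [h0, Finset.mem_filter, Finset.notMem_erase, false_and, if_false, if_true, true_or,
      Nat.lt_succ_self] at hcard ⊢
    omega
  · have := hα j (Finset.mem_erase.2 ⟨hji, hj⟩)
    simp only [Finset.mem_filter, Finset.mem_erase, hj, hji, ne_eq, not_false_eq_true, true_and]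
    split_ifs at hcard this ⊢ <;> omega

theorem prod_X_mul_mem_levelSpan_of_erase (hi : i ∈ s)
    (hprod : ∀ f, (∏ k ∈ s with l k = l i, X k) * f ∈ levelSpan R l (l i + 1) s)
    {f : MvPolynomial τ R} (hf : f ∈ levelSpan R l (l i + 2) (s.erase i)) :
    (∏ k ∈ s.erase i with l k = l i, X k) * f ∈ levelSpan R l (l i + 1) s := by
  have hXi : ∀ f, (∏ k ∈ s.erase i with l k = l i, X k) * (X i * f) ∈
      levelSpan R l (l i + 1) s := by
    intro f
    have hi' : i ∈ s.filter fun k => l k = l i := Finset.mem_filter.2 ⟨hi, rfl⟩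
    have := hprod f
    rwa [← Finset.mul_prod_erase _ _ hi', ← Finset.filter_erase,
      mul_assoc, mul_left_comm] at this
  suffices h : levelSpan R l (l i + 2) (s.erase i) ≤ (levelSpan R l (l i + 1) s).comap
      (LinearMap.mulLeft R (∏ k ∈ s.erase i with l k = l i, X k)) from h hf
  refine levelSpan_le (fun α hα => ?_) (fun q a u h => ?_) fun f j hj k hk hjk hl hf => ?_ <;>
    rw [Submodule.mem_comap, LinearMap.mulLeft_apply]
  · by_cases h0 : α i = 0
    · rw [prod_X_mul_monomial]
      exact monomial_mem_levelSpan (hα.add_of_erase hi h0)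
    · obtain ⟨f, hf⟩ := exists_monomial_eq_prod_X_mul (R := R) (W := {i}) (α := α) (by simpa)
      rw [hf, Finset.prod_singleton]
      exact hXi f
  · obtain ⟨f, hf, r, hr⟩ := exists_levelSum_erase_eq_add (R := R) hi h
    rw [hr, mul_add q, mul_add, mul_left_comm q]
    exact Submodule.add_mem _ (mem_levelSpan_of_mem_levelIdeal
      (Ideal.mul_mem_left _ _ (Ideal.mul_mem_left _ _ hf))) (hXi _)
  · refine mem_levelSpan_of_swap (Finset.mem_of_mem_erase hj) (Finset.mem_of_mem_erase hk) hjk hl ?_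
    rw [map_mul, hf, rename_swap_prod_X (by simp only [Finset.mem_filter, hj, hk, hl])]

end Deletion

theorem levelSpan_succ_eq_top {l : τ → ℕ} {H : ℕ} {s : Finset τ} (hH : levelSpan R l H s = ⊤)
    (herase : ∀ i ∈ s, levelSpan R l (H + 2) (s.erase i) = ⊤) : levelSpan R l (H + 1) s = ⊤ := by
  have hprod : ∀ f, (∏ k ∈ s with l k = H, X k) * f ∈ levelSpan R l (H + 1) s := fun f =>
    prod_X_mul_mem_levelSpan_succ l H s (hH ▸ Submodule.mem_top)
  refine eq_top_of_monomial_mem fun α => ?_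
  by_cases h0 : ∃ i ∈ s, l i = H ∧ α i = 0
  · obtain ⟨i, hi, rfl, hα⟩ := h0
    by_cases h1 : ∃ j ∈ s, l j = l i ∧ α j = 0 ∧ j ≠ i
    · obtain ⟨j, hj, hlj, hαj, hji⟩ := h1
      exact mem_levelSpan_of_swap hj hi hji hlj (rename_swap_monomial (hαj.trans hα.symm) 1)
    · obtain ⟨f, hf⟩ := exists_monomial_eq_prod_X_mul (R := R) (α := α)
        (W := (s.erase i).filter fun k => l k = l i) fun k hk hk0 => by
          simp only [Finset.mem_filter, Finset.mem_erase] at hk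
          exact h1 ⟨k, hk.1.2, hk.2, hk0, hk.1.1⟩
      rw [hf]
      exact prod_X_mul_mem_levelSpan_of_erase hi hprod (herase i hi ▸ Submodule.mem_top)
  · obtain ⟨f, hf⟩ := exists_monomial_eq_prod_X_mul (R := R) (α := α)
      (W := s.filter fun k => l k = H) fun k hk hk0 =>
        h0 ⟨k, (Finset.mem_filter.1 hk).1, (Finset.mem_filter.1 hk).2, hk0⟩
    rw [hf]
    exact hprod f

end CommRing

variable {τ K : Type*} [DecidableEq τ] [Field K] [CharZero K]

theorem levelSpan_zero_eq_top (l : τ → ℕ) (s : Finset τ) : levelSpan K l 0 s = ⊤ := by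
  rcases s.eq_empty_or_nonempty with rfl | hs
  · exact eq_top_of_monomial_mem fun α => monomial_mem_levelSpan (by simp [InBox])
  have hcard : levelSum l s 0 (Polynomial.X ^ 0) = C (s.card : K) := by simp [levelSum_apply]
  have htop : levelIdeal K l 0 s = ⊤ :=
    Ideal.eq_top_of_isUnit_mem _ (levelSum_X_pow_mem (a := 0) (u := 0) (by simp)) <|
      hcard ▸ (IsUnit.mk0 _ (by simpa using hs.ne_empty)).map C
  exact eq_top_iff.2 fun f _ => mem_levelSpan_of_mem_levelIdeal (htop ▸ Submodule.mem_top)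

theorem levelSpan_eq_top (l : τ → ℕ) (H : ℕ) (s : Finset τ) : levelSpan K l H s = ⊤ := by
  induction s using Finset.strongInduction generalizing H with
  | H s ihs =>
    induction H with
    | zero => exact levelSpan_zero_eq_top l s
    | succ H ihH =>
      exact levelSpan_succ_eq_top ihH fun i hi => ihs _ (Finset.erase_ssubset hi) _

end Levels

section Antisymmetrization

variable {n : ℕ}

/-- The polynomial ring `ℂ[x_1,…,x_n,y_1,…,y_n]`. -/
abbrev PolyXY (n : ℕ) : Type := MvPolynomial (Fin n ⊕ Fin n) ℂ

/-- The diagonal action of a permutation on `ℂ[x,y]`. -/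
abbrev permXY (σ : Equiv.Perm (Fin n)) : PolyXY n →ₐ[ℂ] PolyXY n := rename (Sum.map σ σ)

/-- The antisymmetrization operator `f ↦ ∑ σ, sign σ • σ f`, without the factor `1 / n!`. -/
def antisymmetrize (n : ℕ) : PolyXY n →ₗ[ℂ] PolyXY n :=
  ∑ σ : Equiv.Perm (Fin n), (Equiv.Perm.sign σ : ℤ) • (permXY σ).toLinearMap

/-- The monomial `x_m ^ p.1 * y_m ^ p.2` in the `m`-th pair of variables. -/
def pairPower (m : Fin n) (p : ℕ × ℕ) : PolyXY n := X (Sum.inl m) ^ p.1 * X (Sum.inr m) ^ p.2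

/-- The monomial of `ℂ[x,y]` whose exponents in the `i`-th pair of variables are `e i`. -/
def pairMonomial (e : Fin n → ℕ × ℕ) : PolyXY n := ∏ i, pairPower i (e i)

theorem antisymmetrize_apply (f : PolyXY n) :
    antisymmetrize n f = ∑ σ : Equiv.Perm (Fin n), (Equiv.Perm.sign σ : ℤ) • permXY σ f := by
  simp [antisymmetrize]

theorem permXY_mul_apply (σ τ : Equiv.Perm (Fin n)) (f : PolyXY n) :
    permXY (σ * τ) f = permXY σ (permXY τ f) := by
  rw [rename_rename, Sum.map_comp_map]
  rfl

theorem isAltPoly_antisymmetrize (f : PolyXY n) : IsAltPoly n (antisymmetrize n f) := by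
  intro τ
  rw [antisymmetrize_apply, map_sum, Finset.smul_sum, ← Equiv.sum_comp (Equiv.mulLeft τ)
    (fun σ => (Equiv.Perm.sign τ : ℤ) • (Equiv.Perm.sign σ : ℤ) • permXY σ f)]
  refine Finset.sum_congr rfl fun σ _ => ?_
  rw [Equiv.coe_mulLeft, permXY_mul_apply, Equiv.Perm.sign_mul, map_zsmul, smul_smul,
    Units.val_mul, ← mul_assoc, Int.units_coe_mul_self, one_mul]

theorem antisymmetrize_permXY (τ : Equiv.Perm (Fin n)) (f : PolyXY n) :
    antisymmetrize n (permXY τ f) = (Equiv.Perm.sign τ : ℤ) • antisymmetrize n f := by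
  rw [antisymmetrize_apply, antisymmetrize_apply, Finset.smul_sum,
    ← Equiv.sum_comp (Equiv.mulRight τ)
      (fun σ => (Equiv.Perm.sign τ : ℤ) • (Equiv.Perm.sign σ : ℤ) • permXY σ f)]
  refine Finset.sum_congr rfl fun σ _ => ?_
  rw [Equiv.coe_mulRight, permXY_mul_apply, Equiv.Perm.sign_mul, smul_smul, Units.val_mul,
    mul_left_comm, Int.units_coe_mul_self, mul_one]

theorem antisymmetrize_eq_zero {i j : Fin n} (hij : i ≠ j) {f : PolyXY n}
    (h : permXY (Equiv.swap i j) f = f) : antisymmetrize n f = 0 := by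
  have := antisymmetrize_permXY (Equiv.swap i j) f
  rw [h, Equiv.Perm.sign_swap hij, Units.val_neg, Units.val_one, neg_one_smul] at this
  exact self_eq_neg.1 this

theorem IsAltPoly.antisymmetrize_eq {f : PolyXY n} (h : IsAltPoly n f) :
    antisymmetrize n f = (n.factorial : ℂ) • f := by
  have (σ : Equiv.Perm (Fin n)) : (Equiv.Perm.sign σ : ℤ) • permXY σ f = f := by
    rw [h σ, smul_smul, Int.units_coe_mul_self, one_smul]
  simp only [antisymmetrize_apply, this, Finset.sum_const, Finset.card_univ, Fintype.card_perm,
    Fintype.card_fin, Nat.cast_smul_eq_nsmul]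

theorem IsAltPoly.eq_smul_antisymmetrize {f : PolyXY n} (hf : IsAltPoly n f) :
    f = (n.factorial : ℂ)⁻¹ • antisymmetrize n f := by
  rw [hf.antisymmetrize_eq, inv_smul_smul₀ (Nat.cast_ne_zero.2 n.factorial_ne_zero)]

theorem isAltPoly_iff_mem_range {f : PolyXY n} :
    IsAltPoly n f ↔ f ∈ (antisymmetrize n).range := by
  refine ⟨fun h => ⟨(n.factorial : ℂ)⁻¹ • f, ?_⟩, ?_⟩
  · rw [map_smul, ← h.eq_smul_antisymmetrize]
  · rintro ⟨g, rfl⟩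
    exact isAltPoly_antisymmetrize g

theorem antisymmetrize_mul_of_invariant {s : PolyXY n} (hs : ∀ σ, permXY σ s = s) (r : PolyXY n) :
    antisymmetrize n (s * r) = s * antisymmetrize n r := by
  simp only [antisymmetrize_apply, map_mul, hs, Finset.mul_sum, mul_smul_comm]

theorem pairPower_add (m : Fin n) (p q : ℕ × ℕ) :
    pairPower m (p + q) = pairPower m p * pairPower m q := by
  simp only [pairPower, Prod.fst_add, Prod.snd_add]
  ring

theorem pairPower_zero (m : Fin n) : pairPower m 0 = 1 := by
  simp [pairPower]

theorem permXY_pairPower (σ : Equiv.Perm (Fin n)) (m : Fin n) (p : ℕ × ℕ) :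
    permXY σ (pairPower m p) = pairPower (σ m) p := by
  simp [pairPower]

theorem permXY_pairMonomial (σ : Equiv.Perm (Fin n)) (e : Fin n → ℕ × ℕ) :
    permXY σ (pairMonomial e) = pairMonomial (e ∘ σ.symm) := by
  simp only [pairMonomial, map_prod, permXY_pairPower]
  rw [← Equiv.prod_comp σ (fun i => pairPower i ((e ∘ σ.symm) i))]
  simp

theorem pairMonomial_zero : pairMonomial (0 : Fin n → ℕ × ℕ) = 1 := by
  simp [pairMonomial, pairPower_zero]

theorem pairMonomial_add (e e' : Fin n → ℕ × ℕ) :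
    pairMonomial (e + e') = pairMonomial e * pairMonomial e' := by
  simp only [pairMonomial, Pi.add_apply, pairPower_add, Finset.prod_mul_distrib]

theorem pairMonomial_single (m : Fin n) (p : ℕ × ℕ) :
    pairMonomial (Pi.single m p) = pairPower m p := by
  rw [pairMonomial, Fintype.prod_eq_single m, Pi.single_eq_same]
  intro k hk
  rw [Pi.single_eq_of_ne hk, pairPower_zero]

theorem pairMonomial_add_single (e : Fin n → ℕ × ℕ) (m : Fin n) (p : ℕ × ℕ) :
    pairMonomial (e + Pi.single m p) = pairPower m p * pairMonomial e := by
  rw [pairMonomial_add, pairMonomial_single, mul_comm]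

theorem monomial_eq_smul_pairMonomial (d : Fin n ⊕ Fin n →₀ ℕ) (c : ℂ) :
    monomial d c = c • pairMonomial fun i => (d (Sum.inl i), d (Sum.inr i)) := by
  rw [monomial_eq, C_mul', Finsupp.prod_fintype _ _ (by simp), Fintype.prod_sum_type, pairMonomial]
  simp only [pairPower, Finset.prod_mul_distrib]

theorem span_range_pairMonomial : Submodule.span ℂ (Set.range (pairMonomial (n := n))) = ⊤ :=
  eq_top_of_monomial_mem fun d => by
    rw [monomial_eq_smul_pairMonomial, one_smul]
    exact Submodule.subset_span ⟨_, rfl⟩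

theorem antisymmetrize_pairMonomial (e : Fin n → ℕ × ℕ) :
    antisymmetrize n (pairMonomial e) = biVandermonde n e := by
  rw [biVandermonde, Matrix.det_apply, antisymmetrize_apply]
  refine Finset.sum_congr rfl fun σ _ => ?_
  simp only [pairMonomial, map_prod, permXY_pairPower]
  rfl

theorem isAltPoly_biVandermonde (e : Fin n → ℕ × ℕ) : IsAltPoly n (biVandermonde n e) :=
  antisymmetrize_pairMonomial e ▸ isAltPoly_antisymmetrize _

theorem biVandermonde_eq_sum (e : Fin n → ℕ × ℕ) : biVandermonde n e =
    ∑ σ : Equiv.Perm (Fin n), (Equiv.Perm.sign σ : ℤ) • pairMonomial (e ∘ σ) := by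
  rw [biVandermonde, ← Matrix.det_transpose, Matrix.det_apply]
  rfl

theorem biVandermonde_comp_perm (e : Fin n → ℕ × ℕ) (σ : Equiv.Perm (Fin n)) :
    biVandermonde n (e ∘ σ) = (Equiv.Perm.sign σ : ℤ) • biVandermonde n e := by
  rw [zsmul_eq_mul, biVandermonde, biVandermonde, ← Matrix.det_permute']
  rfl

theorem biVandermonde_eq_zero {e : Fin n → ℕ × ℕ} (he : ¬ Function.Injective e) :
    biVandermonde n e = 0 := by
  obtain ⟨i, j, h, hij⟩ := Function.not_injective_iff.1 he
  exact Matrix.det_zero_of_column_eq hij fun k => by simp [h]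

theorem range_antisymmetrize :
    (antisymmetrize n).range = Submodule.span ℂ (Set.range (biVandermonde n)) := by
  rw [LinearMap.range_eq_map, ← span_range_pairMonomial, Submodule.map_span, ← Set.range_comp]
  simp only [Function.comp_def, antisymmetrize_pairMonomial]

end Antisymmetrization

section InvariantIdeal

variable {n : ℕ}

theorem permXY_mem_invIdeal (σ : Equiv.Perm (Fin n)) {f : PolyXY n} (hf : f ∈ invIdeal n) :
    permXY σ f ∈ invIdeal n := by
  suffices h : invIdeal n ≤ (invIdeal n).comap (permXY σ) from h hf
  refine Ideal.span_le.2 fun g hg => ?_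
  rw [SetLike.mem_coe, Ideal.mem_comap, hg.1 σ]
  exact Ideal.subset_span hg

theorem antisymmetrize_mem_invIdeal {f : PolyXY n} (hf : f ∈ invIdeal n) :
    antisymmetrize n f ∈ invIdeal n := by
  rw [antisymmetrize_apply]
  exact Ideal.sum_mem _ fun σ _ => zsmul_mem (permXY_mem_invIdeal σ hf) _

theorem sum_pairPower_mem_invIdeal {p : ℕ × ℕ} (hp : p ≠ 0) :
    ∑ m : Fin n, pairPower m p ∈ invIdeal n := by
  refine Ideal.subset_span ⟨fun σ => ?_, ?_⟩
  · simp only [map_sum, permXY_pairPower]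
    exact Equiv.sum_comp σ (fun m => pairPower m p)
  · have : p.1 = 0 → p.2 ≠ 0 := fun h h' => hp (Prod.ext h h')
    simp only [map_sum, pairPower, map_mul, map_pow, constantCoeff_X]
    refine Finset.sum_eq_zero fun m _ => ?_
    simpa [imp_iff_not_or] using this

theorem sum_pairMonomial_add_single_mem_invIdeal (e : Fin n → ℕ × ℕ) {p : ℕ × ℕ} (hp : p ≠ 0) :
    ∑ m, pairMonomial (e + Pi.single m p) ∈ invIdeal n := by
  simp only [pairMonomial_add_single, ← Finset.sum_mul]
  exact Ideal.mul_mem_right _ _ (sum_pairPower_mem_invIdeal hp)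

theorem sum_sign_smul_eq_zero {ι M : Type*} [Fintype ι] [DecidableEq ι] [AddCommGroup M]
    {i m : ι} (him : i ≠ m) {Φ : Equiv.Perm ι → M} (h : ∀ σ, Φ (σ * Equiv.swap i m) = Φ σ) :
    ∑ σ : Equiv.Perm ι, (Equiv.Perm.sign σ : ℤ) • Φ σ = 0 :=
  Finset.sum_involution (fun σ _ => σ * Equiv.swap i m)
    (fun σ _ => by simp [h, Equiv.Perm.sign_mul, Equiv.Perm.sign_swap him])
    (fun σ _ _ => by simpa using him) (fun _ _ => Finset.mem_univ _)
    fun σ _ => by rw [mul_assoc, Equiv.swap_mul_self, mul_one]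

/-- Transferring the exponent `q + e i` from the `i`-th to the `m`-th pair of variables merges it
with `e m`, so the result is symmetric in `e i` and `e m` and dies under antisymmetrization. -/
theorem pairPower_mul_biVandermonde_mem_invIdeal {q : ℕ × ℕ} (hq : q ≠ 0) (i : Fin n)
    (e : Fin n → ℕ × ℕ) : pairPower i q * biVandermonde n e ∈ invIdeal n := by
  let T : Fin n → Equiv.Perm (Fin n) → PolyXY n := fun m σ =>
    pairMonomial (Function.update (e ∘ σ) i 0 + Pi.single m (q + e (σ i)))
  have hmem : ∑ m, ∑ σ : Equiv.Perm (Fin n), (Equiv.Perm.sign σ : ℤ) • T m σ ∈ invIdeal n := by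
    rw [Finset.sum_comm]
    refine Ideal.sum_mem _ fun σ _ => ?_
    rw [← Finset.smul_sum]
    exact zsmul_mem (sum_pairMonomial_add_single_mem_invIdeal _ (by simp [hq])) _
  have hdiag (σ) : T i σ = pairPower i q * pairMonomial (e ∘ σ) := by
    refine (congrArg pairMonomial (funext fun k => ?_)).trans (pairMonomial_add_single _ _ _)
    rcases eq_or_ne k i with rfl | hk <;> simp [*, add_comm]
  have hoff (m) (hm : m ≠ i) :
      ∑ σ : Equiv.Perm (Fin n), (Equiv.Perm.sign σ : ℤ) • T m σ = 0 := by
    refine sum_sign_smul_eq_zero hm.symm fun σ => congrArg pairMonomial (funext fun k => ?_)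
    rcases eq_or_ne k i with rfl | hki
    · simp [hm.symm]
    rcases eq_or_ne k m with rfl | hkm
    · simp [hki, add_left_comm, add_comm]
    · simp [hki, hkm, Equiv.swap_apply_of_ne_of_ne]
  rw [Fintype.sum_eq_single i hoff] at hmem
  simpa only [biVandermonde_eq_sum, Finset.mul_sum, mul_smul_comm, hdiag] using hmem

theorem X_mul_antisymmetrize_mem_invIdeal (v : Fin n ⊕ Fin n) (f : PolyXY n) :
    X v * antisymmetrize n f ∈ invIdeal n := by
  suffices h : (antisymmetrize n).range ≤
      ((invIdeal n).restrictScalars ℂ).comap (LinearMap.mulLeft ℂ (X v)) from h ⟨f, rfl⟩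
  rw [range_antisymmetrize, Submodule.span_le]
  rintro _ ⟨e, rfl⟩
  rcases v with i | i
  · simpa [pairPower] using pairPower_mul_biVandermonde_mem_invIdeal (q := (1, 0)) (by simp) i e
  · simpa [pairPower] using pairPower_mul_biVandermonde_mem_invIdeal (q := (0, 1)) (by simp) i e

theorem mul_antisymmetrize_sub_mem_invIdeal (r f : PolyXY n) :
    r * antisymmetrize n f - antisymmetrize n (constantCoeff r • f) ∈ invIdeal n := by
  induction r using MvPolynomial.induction_on with
  | C a => simp [C_mul']
  | add p q hp hq =>
    rw [map_add, add_smul, map_add, add_mul, add_sub_add_comm]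
    exact Ideal.add_mem _ hp hq
  | mul_X p v _ =>
    rw [map_mul, constantCoeff_X, mul_zero, zero_smul, map_zero, sub_zero, mul_assoc]
    exact Ideal.mul_mem_left _ _ (X_mul_antisymmetrize_mem_invIdeal v f)

theorem restrictScalars_altIdeal : (altIdeal n).restrictScalars ℂ =
    (antisymmetrize n).range.map (Ideal.Quotient.mkₐ ℂ (invIdeal n)).toLinearMap := by
  apply le_antisymm
  · intro x hx
    refine Submodule.span_induction ?_ (Submodule.zero_mem _)
      (fun _ _ _ _ => Submodule.add_mem _) ?_ (show x ∈ altIdeal n from hx)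
    · rintro _ ⟨f, hf, rfl⟩
      exact ⟨f, isAltPoly_iff_mem_range.1 hf, rfl⟩
    · rintro a _ _ ⟨_, ⟨f, rfl⟩, rfl⟩
      obtain ⟨r, rfl⟩ := Ideal.Quotient.mk_surjective a
      exact ⟨_, ⟨constantCoeff r • f, rfl⟩,
        (Ideal.Quotient.eq.2 (mul_antisymmetrize_sub_mem_invIdeal r f)).symm⟩
  · rintro _ ⟨f, hf, rfl⟩
    exact Ideal.subset_span ⟨f, isAltPoly_iff_mem_range.2 hf, rfl⟩

end InvariantIdeal

section Transfer

theorem sum_sum_eq_sum_diag {ι M : Type*} [AddCommMonoid M] (s : Finset ι)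
    {F : ι → ι → M} (h : ∀ i ∈ s, ∀ j ∈ s, i ≠ j → F i j + F j i = 0) :
    ∑ i ∈ s, ∑ j ∈ s, F i j = ∑ i ∈ s, F i i := by
  classical
  suffices hoff : ∑ p ∈ s.offDiag, F p.1 p.2 = 0 by
    rw [← Finset.sum_product', ← Finset.diag_union_offDiag, Finset.sum_union
      (Finset.disjoint_diag_offDiag s), Finset.sum_diag, hoff, add_zero]
  refine Finset.sum_involution (fun p _ => p.swap) ?_ ?_ ?_ (fun _ _ => Prod.swap_swap _)
  · intro p hp
    rw [Finset.mem_offDiag] at hp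
    exact h _ hp.1 _ hp.2.1 hp.2.2
  · intro p hp _ hswap
    exact (Finset.mem_offDiag.1 hp).2.2 (congrArg Prod.snd hswap)
  · simp +contextual [Finset.mem_offDiag, ne_comm]

variable {n : ℕ}

/-- The polynomial `g(x) * ∏ i, y_i ^ d i`. -/
def xyTerm (g : MvPolynomial (Fin n) ℂ) (d : Fin n → ℕ) : PolyXY n :=
  rename Sum.inl g * ∏ i, X (Sum.inr i) ^ d i

theorem rename_inl_mul_pairMonomial (g : MvPolynomial (Fin n) ℂ) (e : Fin n → ℕ × ℕ) :
    rename Sum.inl g * pairMonomial e =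
      xyTerm (g * ∏ i, X i ^ (e i).1) fun i => (e i).2 := by
  simp only [pairMonomial, pairPower, xyTerm, Finset.prod_mul_distrib, map_mul, map_prod, map_pow,
    rename_X, mul_assoc]

theorem xyTerm_mul (f g : MvPolynomial (Fin n) ℂ) (d : Fin n → ℕ) :
    xyTerm (f * g) d = rename Sum.inl f * xyTerm g d := by
  rw [xyTerm, map_mul, mul_assoc, xyTerm]

theorem xyTerm_monomial (α : Fin n →₀ ℕ) (c : ℂ) (d : Fin n → ℕ) :
    xyTerm (monomial α c) d = c • pairMonomial fun i => (α i, d i) := by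
  rw [monomial_eq, C_mul', Finsupp.prod_fintype _ _ (by simp), pairMonomial, xyTerm]
  simp only [pairPower, Finset.prod_mul_distrib, map_smul, map_prod, map_pow, rename_X,
    smul_mul_assoc]

theorem permXY_xyTerm (σ : Equiv.Perm (Fin n)) (g : MvPolynomial (Fin n) ℂ) (d : Fin n → ℕ) :
    permXY σ (xyTerm g d) = xyTerm (rename σ g) (d ∘ σ.symm) := by
  simp only [xyTerm, map_mul, map_prod, map_pow, rename_X, rename_rename, Sum.map_inr]
  congr 1
  rw [← Equiv.prod_comp σ fun i => X (Sum.inr i) ^ (d ∘ σ.symm) i]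
  simp

theorem sum_eval_mul_pairPower_mem_invIdeal {p : ℕ × ℕ} (hp : p ≠ 0)
    (G : Polynomial (PolyXY n)) :
    ∑ m : Fin n, G.eval (X (Sum.inl m)) * pairPower m p ∈ invIdeal n := by
  induction G using Polynomial.induction_on' with
  | add P Q hP hQ =>
    simp only [Polynomial.eval_add, add_mul, Finset.sum_add_distrib]
    exact Ideal.add_mem _ hP hQ
  | monomial v c =>
    have (m : Fin n) : (Polynomial.monomial v c).eval (X (Sum.inl m)) * pairPower m p =
        c * pairPower m ((v, 0) + p) := by
      rw [pairPower_add, Polynomial.eval_monomial, mul_assoc]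
      simp [pairPower]
    simp only [this, ← Finset.mul_sum]
    exact Ideal.mul_mem_left _ _ (sum_pairPower_mem_invIdeal (by simp [hp]))

/-- The coefficient `(∏_{l k = a - 1} (x_m - x_k)) * x_m ^ u` of the `m`-th point in a level sum. -/
def levelFactor (l : Fin n → ℕ) (a u : ℕ) (m : Fin n) : MvPolynomial (Fin n) ℂ :=
  (∏ k with l k + 1 = a, (X m - X k)) * X m ^ u

theorem levelSum_univ_X_pow (l : Fin n → ℕ) (a u : ℕ) :
    Levels.levelSum l Finset.univ a (Polynomial.X ^ u) =
      ∑ i with a ≤ l i, levelFactor l a u i := by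
  simp [Levels.levelSum_apply, levelFactor]

/-- The monomial `x^{fst ∘ e} y^{snd ∘ e}` weighted by a level factor, after `x_i ^ (e i).1` and
the part of `y_i ^ (e i).2` exceeding the exponent `a - 1` have been transferred to the `m`-th pair
of variables. -/
def transferTerm (e : Fin n → ℕ × ℕ) (a u : ℕ) (i m : Fin n) : PolyXY n :=
  rename Sum.inl (levelFactor (Prod.snd ∘ e) a u m) *
    pairMonomial (Function.update e i (0, a - 1) + Pi.single m ((e i).1, (e i).2 - (a - 1)))

variable {e : Fin n → ℕ × ℕ} {a u : ℕ} {i m : Fin n}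

theorem transferTerm_self (hi : a ≤ (e i).2) :
    transferTerm e a u i i =
      rename Sum.inl (levelFactor (Prod.snd ∘ e) a u i) * pairMonomial e := by
  have : Function.update e i (0, a - 1) + Pi.single i ((e i).1, (e i).2 - (a - 1)) = e := by
    ext k <;> rcases eq_or_ne k i with rfl | hk <;> simp [*]
    omega
  rw [transferTerm, this]

theorem sum_transferTerm_mem_invIdeal (ha : 1 ≤ a) (hi : a ≤ (e i).2) :
    ∑ m, transferTerm e a u i m ∈ invIdeal n := by
  have hp : ((e i).1, (e i).2 - (a - 1)) ≠ 0 := fun h => by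
    have := congrArg Prod.snd h
    simp only [Prod.snd_zero] at this
    omega
  have := sum_eval_mul_pairPower_mem_invIdeal hp
    ((∏ k with (e k).2 + 1 = a, (.X - .C (X (Sum.inl k)))) * .X ^ u)
  have := Ideal.mul_mem_right (pairMonomial (Function.update e i (0, a - 1))) _ this
  rw [Finset.sum_mul] at this
  convert this using 2 with m
  simp [transferTerm, levelFactor, pairMonomial_add_single, mul_assoc, Polynomial.eval_prod]

theorem transferTerm_eq_zero (hm : (e m).2 + 1 = a) : transferTerm e a u i m = 0 := by
  rw [transferTerm, levelFactor, Finset.prod_eq_zero (i := m) (by simpa using hm) (sub_self _)]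
  simp

theorem permXY_swap_transferTerm (hi : a ≤ (e i).2) (hm : a ≤ (e m).2) :
    permXY (Equiv.swap i m) (transferTerm e a u i m) = transferTerm e a u m i := by
  have hfactor : permXY (Equiv.swap i m) (rename Sum.inl (levelFactor (Prod.snd ∘ e) a u m)) =
      rename Sum.inl (levelFactor (Prod.snd ∘ e) a u i) := by
    simp only [levelFactor, map_mul, map_prod, map_sub, map_pow, rename_X, Sum.map_inl,
      Equiv.swap_apply_right]
    congr 1
    refine Finset.prod_congr rfl fun k hk => ?_
    have hk : (e k).2 + 1 = a := by simpa using hk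
    rw [Equiv.swap_apply_of_ne_of_ne] <;> rintro rfl <;> omega
  rw [transferTerm, map_mul, hfactor, permXY_pairMonomial, transferTerm]
  congr 2
  funext k
  rcases eq_or_ne k i with rfl | hki <;> rcases eq_or_ne k m with rfl | hkm
  · simp
  · have : (e m).2 + ((e k).2 - (a - 1)) = (e k).2 + ((e m).2 - (a - 1)) := by omega
    ext <;> simp [hkm, hkm.symm, this, add_comm]
  · ext <;> simp [hki]
  · simp [hki, hkm, Equiv.swap_apply_of_ne_of_ne]

theorem exists_transferTerm_eq_xyTerm (hi : a ≤ (e i).2) (hm : (e m).2 + 2 ≤ a) :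
    ∃ g d, ∑ k, d k ^ 2 < ∑ k, (e k).2 ^ 2 ∧ transferTerm e a u i m = xyTerm g d := by
  refine ⟨_, _, ?_, rename_inl_mul_pairMonomial _ _⟩
  have him : m ≠ i := by rintro rfl; omega
  have hmi : m ∈ Finset.univ.erase i := by simp [him]
  simp only [← Finset.add_sum_erase _ _ (Finset.mem_univ i), ← Finset.add_sum_erase _ _ hmi,
    ← add_assoc]
  refine add_lt_add_of_lt_of_le ?_ (Finset.sum_le_sum fun k hk => ?_)
  · obtain ⟨t, rfl⟩ := Nat.exists_eq_add_of_le hm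
    obtain ⟨s, hs⟩ := Nat.exists_eq_add_of_le hi
    have hpred : (e m).2 + 2 + t - 1 = (e m).2 + 1 + t := by omega
    have hsub : (e m).2 + 2 + t + s - ((e m).2 + 1 + t) = s + 1 := by omega
    have hsq (b : ℕ) : (b + 1 + t) ^ 2 + (b + (s + 1)) ^ 2 < (b + 2 + t + s) ^ 2 + b ^ 2 := by
      nlinarith [Nat.zero_le (s * t)]
    simpa [him, hs, hsub, hpred] using hsq (e m).2
  · simp only [Finset.mem_erase] at hk
    simp [hk.1, hk.2.1]

variable {T : Submodule ℂ (PolyXY n)}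

theorem antisymmetrize_transferTerm_add (him : i ≠ m) (hi : a ≤ (e i).2) (hm : a ≤ (e m).2) :
    antisymmetrize n (transferTerm e a u i m) + antisymmetrize n (transferTerm e a u m i) = 0 := by
  rw [← permXY_swap_transferTerm hi hm, antisymmetrize_permXY, Equiv.Perm.sign_swap him]
  simp

theorem antisymmetrize_rename_levelSum_mul_pairMonomial_mem
    (hI : (invIdeal n).restrictScalars ℂ ≤ T)
    (hlow : ∀ g d, ∑ k, d k ^ 2 < ∑ k, (e k).2 ^ 2 → antisymmetrize n (xyTerm g d) ∈ T)
    (ha : 1 ≤ a) :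
    antisymmetrize n (rename Sum.inl (Levels.levelSum (Prod.snd ∘ e) Finset.univ a
      (Polynomial.X ^ u)) * pairMonomial e) ∈ T := by
  set Y := Finset.univ.filter fun i => a ≤ (e i).2
  have hmemY {i} (hi : i ∈ Y) : a ≤ (e i).2 := (Finset.mem_filter.1 hi).2
  have hdiag : rename Sum.inl (Levels.levelSum (Prod.snd ∘ e) Finset.univ a
      (Polynomial.X ^ u)) * pairMonomial e = ∑ i ∈ Y, transferTerm e a u i i := by
    rw [levelSum_univ_X_pow, map_sum, Finset.sum_mul]
    exact Finset.sum_congr rfl fun i hi => (transferTerm_self (hmemY hi)).symm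
  rw [hdiag, map_sum, ← sum_sum_eq_sum_diag Y
    (F := fun i m => antisymmetrize n (transferTerm e a u i m))
    fun i hi m hm him => antisymmetrize_transferTerm_add him (hmemY hi) (hmemY hm)]
  refine T.sum_mem fun i hi => ?_
  have hsplit := Finset.sum_filter_add_sum_filter_not Finset.univ (fun m => a ≤ (e m).2)
    fun m => antisymmetrize n (transferTerm e a u i m)
  rw [eq_sub_of_add_eq hsplit, ← map_sum]
  refine T.sub_mem (hI (antisymmetrize_mem_invIdeal (sum_transferTerm_mem_invIdeal ha (hmemY hi))))
    (T.sum_mem fun m hm => ?_)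
  have hm : (e m).2 < a := by simpa using hm
  rcases eq_or_ne ((e m).2 + 1) a with hma | hma
  · simp [transferTerm_eq_zero hma]
  · obtain ⟨g, d, hd, h⟩ := exists_transferTerm_eq_xyTerm (u := u) (hmemY hi)
      (show (e m).2 + 2 ≤ a by omega)
    exact h ▸ hlow g d hd

theorem antisymmetrize_xyTerm_levelSum_mem {l : Fin n → ℕ}
    (hI : (invIdeal n).restrictScalars ℂ ≤ T)
    (hlow : ∀ g d, ∑ k, d k ^ 2 < ∑ k, l k ^ 2 → antisymmetrize n (xyTerm g d) ∈ T)
    (hu : a < 1 → 1 ≤ u) (q : MvPolynomial (Fin n) ℂ) :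
    antisymmetrize n (xyTerm (q * Levels.levelSum l Finset.univ a (Polynomial.X ^ u)) l) ∈ T := by
  rw [mul_comm q, xyTerm_mul]
  rcases Nat.eq_zero_or_pos a with rfl | ha
  · have hsum : rename Sum.inl (Levels.levelSum l Finset.univ 0 (Polynomial.X ^ u)) =
        ∑ m : Fin n, pairPower m (u, 0) := by
      simp [levelSum_univ_X_pow, levelFactor, pairPower]
    rw [hsum]
    refine hI (antisymmetrize_mem_invIdeal (Ideal.mul_mem_right _ _ ?_))
    exact sum_pairPower_mem_invIdeal (by simpa [Nat.one_le_iff_ne_zero] using hu)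
  · induction q using MvPolynomial.induction_on' with
    | monomial α c =>
      rw [xyTerm_monomial, mul_smul_comm, map_smul]
      exact T.smul_mem _ (antisymmetrize_rename_levelSum_mul_pairMonomial_mem
        (e := fun i => (α i, l i)) hI hlow ha)
    | add p q hp hq =>
      rw [xyTerm, map_add, add_mul, mul_add, map_add]
      exact T.add_mem hp hq

end Transfer

end

section DinvWords

/-- The list of (dinv, area) pairs of a word of areas. -/
def dinvAreaPairs : List ℕ → List (ℕ × ℕ)
  | [] => []
  | b :: w => (w.countP fun c => c = b ∨ c + 1 = b, b) :: dinvAreaPairs w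

/-- Area words starting below `H`; Dyck paths are the case `H = 1`. -/
def IsAreaWord (H : ℕ) (w : List ℕ) : Prop :=
  (∀ b ∈ w.head?, b < H) ∧ w.IsChain fun b c => c < b + 2

theorem map_snd_dinvAreaPairs (w : List ℕ) : (dinvAreaPairs w).map Prod.snd = w := by
  induction w with
  | nil => rfl
  | cons b w ih => rw [dinvAreaPairs, List.map_cons, ih]

theorem IsAreaWord.mono {H K : ℕ} (h : H ≤ K) {w : List ℕ} (hw : IsAreaWord H w) :
    IsAreaWord K w :=
  ⟨fun b hb => (hw.1 b hb).trans_le h, hw.2⟩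

theorem isAreaWord_cons {H b : ℕ} {w : List ℕ} :
    IsAreaWord H (b :: w) ↔ b < H ∧ IsAreaWord (b + 2) w := by
  simp [IsAreaWord, List.isChain_cons]

theorem countP_eq_adjCount {w : List ℕ} {S : Finset (ℕ × ℕ)}
    (h : (dinvAreaPairs w : Multiset (ℕ × ℕ)) = S.val) (b : ℕ) :
    w.countP (fun c => c = b ∨ c + 1 = b) = Levels.adjCount Prod.snd S b := by
  rw [Levels.adjCount, Finset.card_def, Finset.filter_val, ← Multiset.countP_eq_card_filter, ← h,
    Multiset.coe_countP]
  conv_lhs => rw [← map_snd_dinvAreaPairs w, List.countP_map]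
  rfl

theorem eq_empty_of_inBox_zero {S : Finset (ℕ × ℕ)} (h : Levels.InBox Prod.snd 0 S Prod.fst) :
    S = ∅ := by
  by_contra hne
  obtain ⟨p, hp, hmin⟩ := S.exists_min_image Prod.snd (Finset.nonempty_iff_ne_empty.2 hne)
  set F := S.filter fun q => q.2 = p.2
  have hadj : Levels.adjCount Prod.snd S p.2 = F.card := by
    refine congrArg Finset.card (Finset.filter_congr fun q hq => or_iff_left ?_)
    have := hmin q hq
    omega
  have hlt {q} (hq : q ∈ F) : q.1 + 1 < F.card := by
    have hq := Finset.mem_filter.1 hq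
    simpa [hq.2, hadj] using h q hq.1
  have hinj : Set.InjOn Prod.fst (F : Set (ℕ × ℕ)) := fun q hq r hr hqr =>
    Prod.ext hqr ((Finset.mem_filter.1 hq).2.trans (Finset.mem_filter.1 hr).2.symm)
  have hcard : F.card ≤ (Finset.range (F.card - 1)).card :=
    Finset.card_le_card_of_injOn Prod.fst
      (fun q hq => by have := hlt hq; simp only [Finset.coe_range, Set.mem_Iio]; omega) hinj
  have := hlt (Finset.mem_filter.2 ⟨hp, rfl⟩)
  rw [Finset.card_range] at hcard
  omega

theorem inBox_of_notMem {H : ℕ} {S : Finset (ℕ × ℕ)}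
    (h : Levels.InBox Prod.snd (H + 1) S Prod.fst)
    (hS : (Levels.adjCount Prod.snd S H - 1, H) ∉ S) : Levels.InBox Prod.snd H S Prod.fst := by
  intro p hp
  have hb := h p hp
  rcases eq_or_ne p.2 H with rfl | hpH
  · have : p.1 ≠ Levels.adjCount Prod.snd S p.2 - 1 := fun hp1 => hS (hp1 ▸ hp)
    simp only [Nat.lt_succ_self, if_true, lt_irrefl, if_false] at hb ⊢
    omega
  · split_ifs at hb ⊢ <;> omega

theorem inBox_erase {H : ℕ} {S : Finset (ℕ × ℕ)}
    (h : Levels.InBox Prod.snd (H + 1) S Prod.fst)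
    (hS : (Levels.adjCount Prod.snd S H - 1, H) ∈ S) :
    Levels.InBox Prod.snd (H + 2) (S.erase (Levels.adjCount Prod.snd S H - 1, H)) Prod.fst := by
  intro p hp
  obtain ⟨hne, hpS⟩ := Finset.mem_erase.1 hp
  have hb := h p hpS
  have hcard := Levels.adjCount_erase Prod.snd hS p.2
  rcases eq_or_ne p.2 H with rfl | hpH
  · have : p.1 ≠ Levels.adjCount Prod.snd S p.2 - 1 := fun hp1 => hne (Prod.ext hp1 rfl)
    simp only [true_or, if_true] at hcard
    split_ifs at hb ⊢ <;> omega
  · simp only [hpH.symm, false_or] at hcard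
    split_ifs at hb hcard ⊢ <;> omega

/-- The word is read off greedily: its first letter is the largest level `b < H` for which the pair
`(adjCount b - 1, b)` lies in `S`. -/
theorem exists_isAreaWord_of_inBox {S : Finset (ℕ × ℕ)} {H : ℕ}
    (h : Levels.InBox Prod.snd H S Prod.fst) :
    ∃ w, IsAreaWord H w ∧ (dinvAreaPairs w : Multiset (ℕ × ℕ)) = S.val := by
  induction hc : S.card using Nat.strong_induction_on generalizing S H with | _ c ih
  induction H with
  | zero =>
    rw [eq_empty_of_inBox_zero h]
    exact ⟨[], ⟨by simp, .nil⟩, rfl⟩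
  | succ H ihH =>
    set p := (Levels.adjCount Prod.snd S H - 1, H)
    by_cases hp : p ∈ S
    · obtain ⟨w, hw, hwS⟩ :=
        ih _ (hc ▸ Finset.card_erase_lt_of_mem hp) (inBox_erase h hp) rfl
      refine ⟨H :: w, isAreaWord_cons.2 ⟨Nat.lt_succ_self H, hw⟩, ?_⟩
      have hcard : Levels.adjCount Prod.snd (S.erase p) H = p.1 :=
        Nat.eq_sub_of_add_eq (by simpa [p] using Levels.adjCount_erase Prod.snd hp H)
      rw [dinvAreaPairs, countP_eq_adjCount hwS, hcard, ← Multiset.cons_coe, hwS,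
        ← Finset.insert_val_of_notMem (Finset.notMem_erase p S), Finset.insert_erase hp]
    · obtain ⟨w, hw, hwS⟩ := ihH (inBox_of_notMem h hp)
      exact ⟨w, hw.mono H.le_succ, hwS⟩

variable {n : ℕ}

theorem countP_ofFn (a : Fin n → ℕ) (p : ℕ → Prop) [DecidablePred p] :
    (List.ofFn a).countP (fun c => p c) = (Finset.univ.filter fun j => p (a j)).card := by
  induction n with
  | zero => simp
  | succ n ih =>
    rw [List.ofFn_succ, List.countP_cons, ih, Fin.card_filter_univ_succ]
    by_cases h : p (a 0) <;> simp [h]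

theorem dinvAreaPairs_ofFn (a : Fin n → ℕ) :
    dinvAreaPairs (List.ofFn a) = List.ofFn fun i => (dinvSeq a i, a i) := by
  induction n with
  | zero => simp [dinvAreaPairs]
  | succ n ih =>
    rw [List.ofFn_succ, List.ofFn_succ, dinvAreaPairs, ih,
      countP_ofFn _ fun c => c = a 0 ∨ c + 1 = a 0]
    simp [dinvSeq, Fin.card_filter_univ_succ, Fin.succ_pos]

theorem IsAreaWord.isDyckArea {a : Fin n → ℕ} (h : IsAreaWord 1 (List.ofFn a)) :
    IsDyckArea a := by
  refine ⟨fun i hi => ?_, fun i j hij => ?_⟩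
  · obtain ⟨m, rfl⟩ := Nat.exists_eq_succ_of_ne_zero (Nat.ne_of_gt i.pos)
    obtain rfl : i = 0 := Fin.ext hi
    exact Nat.lt_one_iff.1 (h.1 _ (by simp))
  · have hi : (i : ℕ) + 1 < n := hij ▸ j.2
    obtain rfl : j = ⟨i + 1, hi⟩ := Fin.ext hij
    exact Nat.lt_succ_iff.1 (List.isChain_ofFn.1 h.2 i hi)

theorem exists_perm_of_range_eq {ι α : Type*} {f g : ι → α} (hf : Function.Injective f)
    (hg : Function.Injective g) (h : Set.range f = Set.range g) : ∃ σ : Equiv.Perm ι, f = g ∘ σ :=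
  ⟨(Equiv.ofInjective f hf).trans ((Equiv.setCongr h).trans (Equiv.ofInjective g hg).symm),
    funext fun i => by simp [Equiv.apply_ofInjective_symm]⟩

theorem exists_isDyckArea_of_inBox {e : Fin n → ℕ × ℕ} (he : Function.Injective e)
    (h : Levels.InBox (Prod.snd ∘ e) 1 Finset.univ (Prod.fst ∘ e)) :
    ∃ a : Fin n → ℕ, IsDyckArea a ∧
      ∃ σ : Equiv.Perm (Fin n), (fun i => (dinvSeq a i, a i)) = e ∘ σ := by
  have hadj (b : ℕ) : Levels.adjCount Prod.snd (Finset.univ.image e) b =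
      Levels.adjCount (Prod.snd ∘ e) Finset.univ b := by
    rw [Levels.adjCount, Finset.filter_image, Finset.card_image_of_injective _ he]
    rfl
  have hbox : Levels.InBox Prod.snd 1 (Finset.univ.image e) Prod.fst := by
    intro p hp
    obtain ⟨i, -, rfl⟩ := Finset.mem_image.1 hp
    rw [hadj]
    exact h i (Finset.mem_univ i)
  obtain ⟨w, hw, hwS⟩ := exists_isAreaWord_of_inBox hbox
  have hlen : w.length = n := by
    rw [← map_snd_dinvAreaPairs w, List.length_map, ← Multiset.coe_card, hwS, Finset.card_val,
      Finset.card_image_of_injective _ he, Finset.card_univ, Fintype.card_fin]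
  obtain ⟨a, rfl⟩ : ∃ a : Fin n → ℕ, w = List.ofFn a := by
    subst hlen
    exact ⟨w.get, (List.ofFn_get w).symm⟩
  rw [dinvAreaPairs_ofFn] at hwS
  refine ⟨a, hw.isDyckArea, exists_perm_of_range_eq ?_ he ?_⟩
  · rw [← List.nodup_ofFn, ← Multiset.coe_nodup, hwS]
    exact Finset.nodup _
  · ext p
    rw [← List.mem_ofFn', ← Multiset.mem_coe, hwS]
    simp

end DinvWords

noncomputable section

section Spanning

variable {n : ℕ}

theorem span_biVandermonde_le_range {κ : Type*} {E : κ → Fin n → ℕ × ℕ} :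
    Submodule.span ℂ (Set.range fun k => biVandermonde n (E k)) ≤ (antisymmetrize n).range := by
  rw [range_antisymmetrize]
  exact Submodule.span_mono (Set.range_comp_subset_range E (biVandermonde n))

theorem span_mk_biVandermonde_eq_iff {κ : Type*} {E : κ → Fin n → ℕ × ℕ} :
    Submodule.span ℂ (Set.range fun k => Ideal.Quotient.mk (invIdeal n) (biVandermonde n (E k))) =
        (altIdeal n).restrictScalars ℂ ↔
      (antisymmetrize n).range ≤ (invIdeal n).restrictScalars ℂ ⊔
        Submodule.span ℂ (Set.range fun k => biVandermonde n (E k)) := by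
  set mk : PolyXY n →ₗ[ℂ] _ := (Ideal.Quotient.mkₐ ℂ (invIdeal n)).toLinearMap
  have hker : LinearMap.ker mk = (invIdeal n).restrictScalars ℂ :=
    Submodule.ext fun _ => Ideal.Quotient.eq_zero_iff_mem
  have hspan : Submodule.span ℂ (Set.range fun k => mk (biVandermonde n (E k))) =
      (Submodule.span ℂ (Set.range fun k => biVandermonde n (E k))).map mk := by
    rw [Submodule.map_span, ← Set.range_comp, Function.comp_def]
  change Submodule.span ℂ (Set.range fun k => mk (biVandermonde n (E k))) = _ ↔ _
  rw [hspan, restrictScalars_altIdeal, le_antisymm_iff,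
    and_iff_right (Submodule.map_mono span_biVandermonde_le_range), LinearMap.map_le_map_iff,
    hker, sup_comm]

/-- The bivariate Vandermonde determinant of the (dinv, area) pairs of a Dyck path. -/
def dyckVandermonde (π : {a : Fin n → ℕ // IsDyckArea a}) : PolyXY n :=
  biVandermonde n fun i => (dinvSeq π.1 i, π.1 i)

/-- The polynomials congruent modulo `invIdeal n` to a combination of Dyck path determinants. -/
def dyckSpan (n : ℕ) : Submodule ℂ (PolyXY n) :=
  (invIdeal n).restrictScalars ℂ ⊔ Submodule.span ℂ (Set.range dyckVandermonde)

theorem biVandermonde_mem_dyckSpan_of_inBox {e : Fin n → ℕ × ℕ}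
    (h : Levels.InBox (Prod.snd ∘ e) 1 Finset.univ (Prod.fst ∘ e)) :
    biVandermonde n e ∈ dyckSpan n := by
  by_cases he : Function.Injective e
  · obtain ⟨a, ha, σ, hσ⟩ := exists_isDyckArea_of_inBox he h
    have : biVandermonde n e = (Equiv.Perm.sign σ : ℤ) • dyckVandermonde ⟨a, ha⟩ := by
      rw [dyckVandermonde, hσ, biVandermonde_comp_perm, smul_smul, Int.units_coe_mul_self, one_smul]
    rw [this]
    exact zsmul_mem (Submodule.mem_sup_right (Submodule.subset_span (Set.mem_range_self _))) _
  · rw [biVandermonde_eq_zero he]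
    exact Submodule.zero_mem _

theorem antisymmetrize_xyTerm_mem_dyckSpan (g : MvPolynomial (Fin n) ℂ) (l : Fin n → ℕ) :
    antisymmetrize n (xyTerm g l) ∈ dyckSpan n := by
  induction hN : ∑ k, l k ^ 2 using Nat.strong_induction_on generalizing g l with | _ N ih
  have hlow (g d) (hd : ∑ k, d k ^ 2 < ∑ k, l k ^ 2) :
      antisymmetrize n (xyTerm g d) ∈ dyckSpan n := ih _ (hN ▸ hd) g d rfl
  let φ : MvPolynomial (Fin n) ℂ →ₗ[ℂ] PolyXY n := antisymmetrize n ∘ₗ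
    LinearMap.mulRight ℂ (∏ i, X (Sum.inr i) ^ l i) ∘ₗ (rename Sum.inl).toLinearMap
  suffices h : (dyckSpan n).comap φ = ⊤ from
    h.ge (Submodule.mem_top (x := g))
  rw [eq_top_iff, ← Levels.levelSpan_eq_top l 1 Finset.univ]
  refine Levels.levelSpan_le ?box ?sum ?swap
  case box =>
    intro α hα
    change antisymmetrize n (xyTerm (monomial α 1) l) ∈ dyckSpan n
    rw [xyTerm_monomial, one_smul, antisymmetrize_pairMonomial]
    exact biVandermonde_mem_dyckSpan_of_inBox hα
  case sum =>
    exact fun q a u hu => antisymmetrize_xyTerm_levelSum_mem le_sup_left hlow hu q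
  case swap =>
    intro f i _ j _ hij hl hf
    change antisymmetrize n (xyTerm f l) ∈ dyckSpan n
    have hl' : l ∘ (Equiv.swap i j).symm = l := by
      funext k
      simp only [Equiv.symm_swap, Function.comp_apply, Equiv.swap_apply_def]
      split_ifs <;> simp_all
    rw [antisymmetrize_eq_zero hij (by rw [permXY_xyTerm, hf, hl'])]
    exact Submodule.zero_mem _

theorem range_antisymmetrize_le_dyckSpan : (antisymmetrize n).range ≤ dyckSpan n := by
  rw [range_antisymmetrize, Submodule.span_le]
  rintro _ ⟨e, rfl⟩
  have h := antisymmetrize_xyTerm_mem_dyckSpan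
    (monomial (Finsupp.equivFunOnFinite.symm (Prod.fst ∘ e)) 1) (Prod.snd ∘ e)
  rwa [xyTerm_monomial, one_smul, antisymmetrize_pairMonomial] at h

theorem span_mk_dyckVandermonde :
    Submodule.span ℂ (Set.range fun π => Ideal.Quotient.mk (invIdeal n) (dyckVandermonde π)) =
      (altIdeal n).restrictScalars ℂ :=
  span_mk_biVandermonde_eq_iff.2 range_antisymmetrize_le_dyckSpan

end Spanning

section WindowEvaluation

variable {n : ℕ}

/-- The variable `v_m`, cut off to zero outside the window `m < n`. -/
def windowX (n m : ℕ) : MvPolynomial ℕ ℂ := if m < n then X m else 0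

/-- The linear map on `ℂ[y]` sending `y^d` to `∏ i, v_{u i + d i}`. -/
def windowMap (u : Fin n → ℕ) : MvPolynomial (Fin n) ℂ →ₗ[ℂ] MvPolynomial ℕ ℂ :=
  (basisMonomials (Fin n) ℂ).constr ℂ fun d => ∏ i, windowX n (u i + d i)

/-- The specialization `x_i = u i`. -/
def evalX (u : Fin n → ℕ) : PolyXY n →ₐ[ℂ] MvPolynomial (Fin n) ℂ :=
  aeval (Sum.elim (fun i => C (u i : ℂ)) X)

/-- The linear map sending `x^c y^d` to `u^c ∏ i, v_{u i + d i}`; it separates the Dyck path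
determinants. -/
def windowEval (u : Fin n → ℕ) : PolyXY n →ₗ[ℂ] MvPolynomial ℕ ℂ :=
  windowMap u ∘ₗ (evalX u).toLinearMap

/-- The substitution `x_i ↦ x_i + δ i`. -/
def shiftX (δ : Fin n → ℕ) : PolyXY n →ₐ[ℂ] PolyXY n :=
  aeval (Sum.elim (fun i => X (Sum.inl i) + C (δ i : ℂ)) (X ∘ Sum.inr))

theorem windowMap_monomial (u : Fin n → ℕ) (d : Fin n →₀ ℕ) :
    windowMap u (monomial d 1) = ∏ i, windowX n (u i + d i) := by
  simpa only [coe_basisMonomials, windowMap] using (basisMonomials (Fin n) ℂ).constr_basis ℂ _ d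

theorem windowMap_eq_zero {u : Fin n → ℕ} {i : Fin n} (hi : n ≤ u i) : windowMap u = 0 := by
  refine (basisMonomials (Fin n) ℂ).ext fun d => ?_
  rw [coe_basisMonomials, windowMap_monomial, LinearMap.zero_apply]
  exact Finset.prod_eq_zero (Finset.mem_univ i) (if_neg (by omega))

theorem windowMap_rename (u : Fin n → ℕ) (σ : Equiv.Perm (Fin n)) (g : MvPolynomial (Fin n) ℂ) :
    windowMap u (rename σ g) = windowMap (u ∘ σ) g := by
  suffices h : windowMap u ∘ₗ (rename σ).toLinearMap = windowMap (u ∘ σ) from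
    LinearMap.congr_fun h g
  refine (basisMonomials (Fin n) ℂ).ext fun d => ?_
  simp only [coe_basisMonomials, LinearMap.comp_apply, AlgHom.toLinearMap_apply, rename_monomial,
    windowMap_monomial]
  rw [← Equiv.prod_comp σ]
  simp

theorem windowMap_prod_X_pow_mul (u δ : Fin n → ℕ) (g : MvPolynomial (Fin n) ℂ) :
    windowMap u ((∏ i, X i ^ δ i) * g) = windowMap (u + δ) g := by
  suffices h : windowMap u ∘ₗ LinearMap.mulLeft ℂ (∏ i, X i ^ δ i) = windowMap (u + δ) from
    LinearMap.congr_fun h g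
  have hδ : ∏ i, X i ^ δ i = monomial (R := ℂ) (Finsupp.equivFunOnFinite.symm δ) 1 := by
    simp [monomial_eq, Finsupp.prod_fintype]
  refine (basisMonomials (Fin n) ℂ).ext fun d => ?_
  simp [hδ, monomial_mul, windowMap_monomial, add_assoc]

theorem evalX_permXY (u : Fin n → ℕ) (σ : Equiv.Perm (Fin n)) (f : PolyXY n) :
    evalX u (permXY σ f) = rename σ (evalX (u ∘ σ) f) := by
  suffices h : (evalX u).comp (permXY σ) = (rename σ).comp (evalX (u ∘ σ)) from
    DFunLike.congr_fun h f
  refine algHom_ext fun v => ?_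
  rcases v with i | i <;> simp [evalX]

theorem evalX_shiftX (u δ : Fin n → ℕ) (f : PolyXY n) :
    evalX u (shiftX δ f) = evalX (u + δ) f := by
  suffices h : (evalX u).comp (shiftX δ) = evalX (u + δ) from DFunLike.congr_fun h f
  refine algHom_ext fun v => ?_
  rcases v with i | i <;> simp [evalX, shiftX]

theorem evalX_pairMonomial (u : Fin n → ℕ) (e : Fin n → ℕ × ℕ) :
    evalX u (pairMonomial e) = (∏ i, (u i : ℂ) ^ (e i).1) • ∏ i, X i ^ (e i).2 := by
  simp [pairMonomial, pairPower, evalX, smul_eq_C_mul, Finset.prod_mul_distrib]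

theorem windowEval_permXY (u : Fin n → ℕ) (σ : Equiv.Perm (Fin n)) (f : PolyXY n) :
    windowEval u (permXY σ f) = windowEval (u ∘ σ) f := by
  rw [windowEval, LinearMap.comp_apply, AlgHom.toLinearMap_apply, evalX_permXY, windowMap_rename]
  rfl

theorem windowEval_pairMonomial_mul_shiftX (u : Fin n → ℕ) (e : Fin n → ℕ × ℕ) (f : PolyXY n) :
    windowEval u (pairMonomial e * shiftX (Prod.snd ∘ e) f) =
      (∏ i, (u i : ℂ) ^ (e i).1) • windowEval (u + Prod.snd ∘ e) f := by
  rw [windowEval, LinearMap.comp_apply, AlgHom.toLinearMap_apply, map_mul, evalX_shiftX,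
    evalX_pairMonomial, smul_mul_assoc, map_smul]
  exact congrArg _ (windowMap_prod_X_pow_mul u (Prod.snd ∘ e) _)

theorem windowEval_antisymmetrize (u : Fin n → ℕ) (f : PolyXY n) :
    windowEval u (antisymmetrize n f) =
      ∑ σ : Equiv.Perm (Fin n), (Equiv.Perm.sign σ : ℤ) • windowEval (u ∘ σ) f := by
  simp only [antisymmetrize_apply, map_sum, map_zsmul, windowEval_permXY]

theorem IsAltPoly.windowEval_comp_perm {f : PolyXY n} (hf : IsAltPoly n f) (u : Fin n → ℕ)
    (σ : Equiv.Perm (Fin n)) :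
    windowEval (u ∘ σ) f = (Equiv.Perm.sign σ : ℤ) • windowEval u f := by
  rw [← windowEval_permXY, hf σ, map_zsmul]

theorem IsAltPoly.windowEval_eq_zero {f : PolyXY n} (hf : IsAltPoly n f) {u : Fin n → ℕ}
    (hu : ¬ (Function.Injective u ∧ ∀ i, u i < n)) : windowEval u f = 0 := by
  by_cases hlt : ∀ i, u i < n
  · obtain ⟨i, j, h, hij⟩ := Function.not_injective_iff.1 fun hinj => hu ⟨hinj, hlt⟩
    have hswap : u ∘ Equiv.swap i j = u := by
      funext k
      simp only [Function.comp_apply, Equiv.swap_apply_def]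
      split_ifs <;> simp_all
    have := hf.windowEval_comp_perm u (Equiv.swap i j)
    rw [hswap, Equiv.Perm.sign_swap hij, Units.val_neg, Units.val_one, neg_one_smul] at this
    exact self_eq_neg.1 this
  · push Not at hlt
    obtain ⟨i, hi⟩ := hlt
    rw [windowEval, windowMap_eq_zero hi, LinearMap.zero_comp, LinearMap.zero_apply]

theorem eq_zero_of_injective_perm_add {σ : Equiv.Perm (Fin n)} {δ : Fin n → ℕ}
    (hinj : Function.Injective ((fun i => (σ i : ℕ)) + δ)) (hlt : ∀ i, (σ i : ℕ) + δ i < n) :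
    δ = 0 := by
  let τ : Fin n → Fin n := fun i => ⟨σ i + δ i, hlt i⟩
  have hτ : Function.Bijective τ :=
    Finite.injective_iff_bijective.1 fun i j h => hinj (Fin.ext_iff.1 h)
  have hsum : ∑ i, ((σ i : ℕ) + δ i) = ∑ i, (σ i : ℕ) :=
    (hτ.sum_comp fun i => (i : ℕ)).trans (Equiv.sum_comp σ fun i => (i : ℕ)).symm
  rw [Finset.sum_add_distrib, Nat.add_eq_left, Finset.sum_eq_zero_iff] at hsum
  exact funext fun i => hsum i (Finset.mem_univ i)

/-- The evaluation of `windowEval` at the staircase `u = (0, …, n - 1)`. -/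
def stairEval (n : ℕ) : PolyXY n →ₗ[ℂ] MvPolynomial ℕ ℂ := windowEval fun i => (i : ℕ)

theorem stairEval_antisymmetrize_mul_shiftX_eq_zero {e : Fin n → ℕ × ℕ} (he : Prod.snd ∘ e ≠ 0)
    {f : PolyXY n} (hf : IsAltPoly n f) :
    stairEval n (antisymmetrize n (pairMonomial e * shiftX (Prod.snd ∘ e) f)) = 0 := by
  rw [stairEval, windowEval_antisymmetrize]
  refine Finset.sum_eq_zero fun σ _ => ?_
  rw [windowEval_pairMonomial_mul_shiftX, hf.windowEval_eq_zero, smul_zero, smul_zero]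
  exact fun hu => he (eq_zero_of_injective_perm_add (σ := σ) hu.1 hu.2)

theorem stairEval_antisymmetrize_mul_mem_span {e : Fin n → ℕ × ℕ} (he : Prod.snd ∘ e = 0)
    {f : PolyXY n} (hf : IsAltPoly n f) :
    stairEval n (antisymmetrize n (pairMonomial e * shiftX (Prod.snd ∘ e) f)) ∈
      Submodule.span ℂ {stairEval n f} := by
  rw [stairEval, windowEval_antisymmetrize]
  refine Submodule.sum_mem _ fun σ _ => zsmul_mem ?_ _
  rw [windowEval_pairMonomial_mul_shiftX, he, add_zero, hf.windowEval_comp_perm]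
  exact Submodule.smul_mem _ _ (zsmul_mem (Submodule.mem_span_singleton_self _) _)

end WindowEvaluation

section DegreeFiltration

variable {n : ℕ}

/-- The total degree in the `x` variables of the monomial with exponents `e`. -/
def xDegree (e : Fin n → ℕ × ℕ) : ℕ := ∑ i, (e i).1

/-- The polynomials of `x`-degree less than `d`. -/
def xFiltration (n d : ℕ) : Submodule ℂ (PolyXY n) :=
  Submodule.span ℂ (pairMonomial '' {e | xDegree e < d})

/-- The grading of `ℂ[x,y]` by the degree in the `x` variables. -/
def xWeight (n : ℕ) : Fin n ⊕ Fin n → ℕ := Sum.elim (fun _ => 1) fun _ => 0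

/-- The component of degree `d` for the grading by `xWeight`. -/
def xComponent (n d : ℕ) : PolyXY n →ₗ[ℂ] PolyXY n :=
  weightedHomogeneousComponent (xWeight n) d

theorem xDegree_add (e e' : Fin n → ℕ × ℕ) : xDegree (e + e') = xDegree e + xDegree e' :=
  Finset.sum_add_distrib

theorem xDegree_comp_perm (e : Fin n → ℕ × ℕ) (σ : Equiv.Perm (Fin n)) :
    xDegree (e ∘ σ) = xDegree e :=
  Equiv.sum_comp σ fun i => (e i).1

theorem pairMonomial_mem_xFiltration {e : Fin n → ℕ × ℕ} {d : ℕ} (h : xDegree e < d) :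
    pairMonomial e ∈ xFiltration n d :=
  Submodule.subset_span ⟨e, h, rfl⟩

theorem xFiltration_mono {a b : ℕ} (h : a ≤ b) : xFiltration n a ≤ xFiltration n b :=
  Submodule.span_mono (Set.image_mono fun _ he => lt_of_lt_of_le he h)

theorem mul_mem_xFiltration {a b : ℕ} {f g : PolyXY n} (hf : f ∈ xFiltration n (a + 1))
    (hg : g ∈ xFiltration n b) : f * g ∈ xFiltration n (a + b) := by
  suffices h : xFiltration n (a + 1) * xFiltration n b ≤ xFiltration n (a + b) from
    h (Submodule.mul_mem_mul hf hg)
  rw [xFiltration, xFiltration, Submodule.span_mul_span, Submodule.span_le]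
  rintro _ ⟨_, ⟨e, he, rfl⟩, _, ⟨e', he', rfl⟩, rfl⟩
  have hdeg : xDegree (e + e') < a + b := by
    rw [xDegree_add]
    exact Nat.add_lt_add_of_le_of_lt (Nat.lt_succ_iff.1 he) he'
  exact Submodule.subset_span ⟨e + e', hdeg, pairMonomial_add e e'⟩

theorem pairMonomial_sub_shiftX_add {δ : Fin n → ℕ} {e e' : Fin n → ℕ × ℕ}
    (he : pairMonomial e - shiftX δ (pairMonomial e) ∈ xFiltration n (xDegree e))
    (he' : pairMonomial e' - shiftX δ (pairMonomial e') ∈ xFiltration n (xDegree e')) :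
    pairMonomial (e + e') - shiftX δ (pairMonomial (e + e')) ∈
      xFiltration n (xDegree (e + e')) := by
  set r := pairMonomial e - shiftX δ (pairMonomial e)
  set r' := pairMonomial e' - shiftX δ (pairMonomial e')
  have hsplit : pairMonomial (e + e') - shiftX δ (pairMonomial (e + e')) =
      pairMonomial e * r' + pairMonomial e' * r - r * r' := by
    simp only [r, r', pairMonomial_add, map_mul]
    ring
  rw [hsplit, xDegree_add]
  refine Submodule.sub_mem _ (Submodule.add_mem _ ?_ ?_) ?_
  · exact mul_mem_xFiltration (pairMonomial_mem_xFiltration (Nat.lt_succ_self _)) he'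
  · rw [add_comm (xDegree e)]
    exact mul_mem_xFiltration (pairMonomial_mem_xFiltration (Nat.lt_succ_self _)) he
  · exact mul_mem_xFiltration (xFiltration_mono (Nat.le_succ _) he) he'

theorem pairMonomial_sub_shiftX_mem_xFiltration (δ : Fin n → ℕ) (e : Fin n → ℕ × ℕ) :
    pairMonomial e - shiftX δ (pairMonomial e) ∈ xFiltration n (xDegree e) := by
  let T : AddSubmonoid (Fin n → ℕ × ℕ) :=
    { carrier := {e | pairMonomial e - shiftX δ (pairMonomial e) ∈ xFiltration n (xDegree e)}
      add_mem' := pairMonomial_sub_shiftX_add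
      zero_mem' := by simp [pairMonomial_zero] }
  have hx (i : Fin n) : Pi.single i (1, 0) ∈ T := by
    have hdeg : xDegree (0 : Fin n → ℕ × ℕ) < xDegree (Pi.single i (1, 0)) := by
      simp [xDegree, Pi.single_apply, apply_ite Prod.fst]
    have : pairMonomial (Pi.single i (1, 0)) - shiftX δ (pairMonomial (Pi.single i (1, 0))) =
        (-(δ i : ℂ)) • pairMonomial 0 := by
      simp [pairMonomial_single, pairMonomial_zero, pairPower, shiftX, smul_eq_C_mul]
    change _ ∈ xFiltration n _
    exact this ▸ Submodule.smul_mem _ _ (pairMonomial_mem_xFiltration hdeg)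
  have hy (i : Fin n) : Pi.single i (0, 1) ∈ T := by
    suffices h : pairMonomial (Pi.single i (0, 1)) -
        shiftX δ (pairMonomial (Pi.single i (0, 1))) = 0 from
      show _ ∈ xFiltration n _ from h ▸ Submodule.zero_mem _
    simp [pairMonomial_single, pairPower, shiftX]
  have hsingle (i : Fin n) : Pi.single i (e i) ∈ T := by
    have : (Pi.single i (e i) : Fin n → ℕ × ℕ) =
        (e i).1 • Pi.single i (1, 0) + (e i).2 • Pi.single i (0, 1) := by
      simp [← Pi.single_smul, ← Pi.single_add]
    exact this ▸ T.add_mem (T.nsmul_mem (hx i) _) (T.nsmul_mem (hy i) _)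
  rw [← Finset.univ_sum_single e]
  exact T.sum_mem fun i _ => hsingle i

theorem biVandermonde_sub_shiftX_mem_xFiltration (δ : Fin n → ℕ) (e : Fin n → ℕ × ℕ) :
    biVandermonde n e - shiftX δ (biVandermonde n e) ∈ xFiltration n (xDegree e) := by
  rw [biVandermonde_eq_sum, map_sum, ← Finset.sum_sub_distrib]
  refine Submodule.sum_mem _ fun σ _ => ?_
  rw [map_zsmul, ← smul_sub, ← xDegree_comp_perm e σ]
  exact zsmul_mem (pairMonomial_sub_shiftX_mem_xFiltration δ _) _

theorem isWeightedHomogeneous_pairMonomial (e : Fin n → ℕ × ℕ) :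
    IsWeightedHomogeneous (xWeight n) (pairMonomial e) (xDegree e) := by
  refine IsWeightedHomogeneous.prod _ _ _ fun i _ => ?_
  have hx := (isWeightedHomogeneous_X ℂ (xWeight n) (Sum.inl i)).pow (e i).1
  have hy := (isWeightedHomogeneous_X ℂ (xWeight n) (Sum.inr i)).pow (e i).2
  simpa [xWeight, pairPower] using hx.mul hy

theorem xComponent_pairMonomial (d : ℕ) (e : Fin n → ℕ × ℕ) :
    xComponent n d (pairMonomial e) = if d = xDegree e then pairMonomial e else 0 :=
  weightedHomogeneousComponent_of_mem (isWeightedHomogeneous_pairMonomial e)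

theorem xComponent_biVandermonde (d : ℕ) (e : Fin n → ℕ × ℕ) :
    xComponent n d (biVandermonde n e) = if d = xDegree e then biVandermonde n e else 0 := by
  rw [biVandermonde_eq_sum, map_sum]
  simp only [map_zsmul, xComponent_pairMonomial, xDegree_comp_perm]
  split_ifs <;> simp

theorem antisymmetrize_pairMonomial_mul_biVandermonde (e e' : Fin n → ℕ × ℕ) :
    antisymmetrize n (pairMonomial e * biVandermonde n e') =
      ∑ σ : Equiv.Perm (Fin n), (Equiv.Perm.sign σ : ℤ) • biVandermonde n (e + e' ∘ σ) := by
  simp only [biVandermonde_eq_sum e', Finset.mul_sum, mul_smul_comm, ← pairMonomial_add, map_sum,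
    map_zsmul, antisymmetrize_pairMonomial]

theorem xComponent_antisymmetrize_mul (d : ℕ) (e e' : Fin n → ℕ × ℕ) :
    xComponent n d (antisymmetrize n (pairMonomial e * biVandermonde n e')) =
      if d = xDegree e + xDegree e' then antisymmetrize n (pairMonomial e * biVandermonde n e')
      else 0 := by
  rw [antisymmetrize_pairMonomial_mul_biVandermonde, map_sum]
  simp only [map_zsmul, xComponent_biVandermonde, xDegree_add, xDegree_comp_perm]
  split_ifs <;> simp

end DegreeFiltration

section LowerDegree

variable {n : ℕ}

/-- The values of `stairEval` at the alternating polynomials of `x`-degree less than `d`. -/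
def stairFiltration (n d : ℕ) : Submodule ℂ (MvPolynomial ℕ ℂ) :=
  (xFiltration n d).map (stairEval n ∘ₗ antisymmetrize n)

/-- The polynomials all of whose components have the same image under `stairEval` as an
alternating polynomial of lower `x`-degree. -/
def stairLower (n : ℕ) : Submodule ℂ (PolyXY n) :=
  ⨅ d, (stairFiltration n d).comap (stairEval n ∘ₗ xComponent n d)

theorem stairEval_biVandermonde_mem {e : Fin n → ℕ × ℕ} {d : ℕ} (h : xDegree e < d) :
    stairEval n (biVandermonde n e) ∈ stairFiltration n d := by
  rw [← antisymmetrize_pairMonomial]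
  exact ⟨_, pairMonomial_mem_xFiltration h, rfl⟩

theorem xDegree_pos {e : Fin n → ℕ × ℕ} (he : e ≠ 0) (hy : Prod.snd ∘ e = 0) : 0 < xDegree e := by
  obtain ⟨i, hi⟩ := Function.ne_iff.1 he
  exact Finset.sum_pos' (fun _ _ => Nat.zero_le _) ⟨i, Finset.mem_univ i,
    Nat.pos_of_ne_zero fun hx => hi (Prod.ext hx (congrFun hy i))⟩

/-- Shifting `x` by the `y`-exponents of `e` changes the determinant in lower `x`-degree only, and
turns its product with `pairMonomial e` into a term on which `stairEval` is under control. -/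
theorem stairEval_antisymmetrize_mul_mem {e : Fin n → ℕ × ℕ} (he : e ≠ 0)
    (e' : Fin n → ℕ × ℕ) :
    stairEval n (antisymmetrize n (pairMonomial e * biVandermonde n e')) ∈
      stairFiltration n (xDegree e + xDegree e') := by
  have hlow : pairMonomial e *
      (biVandermonde n e' - shiftX (Prod.snd ∘ e) (biVandermonde n e')) ∈
        xFiltration n (xDegree e + xDegree e') :=
    mul_mem_xFiltration (pairMonomial_mem_xFiltration (Nat.lt_succ_self _))
      (biVandermonde_sub_shiftX_mem_xFiltration _ _)
  have hshift : stairEval n (antisymmetrize n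
      (pairMonomial e * shiftX (Prod.snd ∘ e) (biVandermonde n e'))) ∈
        stairFiltration n (xDegree e + xDegree e') := by
    by_cases hy : Prod.snd ∘ e = 0
    · have hlt : xDegree e' < xDegree e + xDegree e' := Nat.lt_add_of_pos_left (xDegree_pos he hy)
      refine (Submodule.span_singleton_le_iff_mem _ _).2 (stairEval_biVandermonde_mem hlt) ?_
      exact stairEval_antisymmetrize_mul_mem_span hy (isAltPoly_biVandermonde e')
    · rw [stairEval_antisymmetrize_mul_shiftX_eq_zero hy (isAltPoly_biVandermonde e')]
      exact Submodule.zero_mem _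
  rw [← sub_add_cancel (biVandermonde n e') (shiftX (Prod.snd ∘ e) (biVandermonde n e')), mul_add,
    map_add, map_add]
  exact Submodule.add_mem _ ⟨_, hlow, rfl⟩ hshift

theorem antisymmetrize_mul_biVandermonde_mem_stairLower {e : Fin n → ℕ × ℕ} (he : e ≠ 0)
    (e' : Fin n → ℕ × ℕ) :
    antisymmetrize n (pairMonomial e * biVandermonde n e') ∈ stairLower n := by
  refine Submodule.mem_iInf _ |>.2 fun d => ?_
  rw [Submodule.mem_comap, LinearMap.comp_apply, xComponent_antisymmetrize_mul]
  split_ifs with hd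
  · exact hd ▸ stairEval_antisymmetrize_mul_mem he e'
  · exact (map_zero (stairEval n)).symm ▸ Submodule.zero_mem _

theorem antisymmetrize_mul_antisymmetrize_mem_stairLower {s : PolyXY n}
    (hs : constantCoeff s = 0) (r : PolyXY n) :
    antisymmetrize n (s * antisymmetrize n r) ∈ stairLower n := by
  have hmono {e : Fin n → ℕ × ℕ} (he : e ≠ 0) :
      antisymmetrize n (pairMonomial e * antisymmetrize n r) ∈ stairLower n := by
    suffices h : (stairLower n).comap
        (antisymmetrize n ∘ₗ LinearMap.mulLeft ℂ (pairMonomial e) ∘ₗ antisymmetrize n) = ⊤ from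
      h.ge (Submodule.mem_top (x := r))
    rw [eq_top_iff, ← span_range_pairMonomial, Submodule.span_le]
    rintro _ ⟨e', rfl⟩
    change antisymmetrize n (pairMonomial e * antisymmetrize n (pairMonomial e')) ∈ stairLower n
    rw [antisymmetrize_pairMonomial]
    exact antisymmetrize_mul_biVandermonde_mem_stairLower he e'
  rw [s.as_sum, Finset.sum_mul, map_sum]
  refine Submodule.sum_mem _ fun d hd => ?_
  rw [monomial_eq_smul_pairMonomial, smul_mul_assoc, map_smul]
  refine Submodule.smul_mem _ _ (hmono fun h => mem_support_iff.1 hd ?_)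
  have hd0 : d = 0 := by
    ext (i | i)
    · exact congrArg Prod.fst (congrFun h i)
    · exact congrArg Prod.snd (congrFun h i)
  exact hd0 ▸ hs

theorem antisymmetrize_mem_stairLower {f : PolyXY n} (hf : f ∈ invIdeal n) :
    antisymmetrize n f ∈ stairLower n := by
  rw [invIdeal] at hf
  induction hf using Submodule.closure_induction with
  | zero => exact (map_zero (antisymmetrize n)).symm ▸ Submodule.zero_mem _
  | add f g _ _ hf hg => exact (map_add (antisymmetrize n) f g).symm ▸ Submodule.add_mem _ hf hg
  | smul_mem r s hs =>
    have heq : antisymmetrize n (r • s) = s * antisymmetrize n r := by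
      rw [smul_eq_mul, mul_comm, antisymmetrize_mul_of_invariant hs.1]
    have halt : IsAltPoly n (s * antisymmetrize n r) := heq ▸ isAltPoly_antisymmetrize _
    rw [heq, halt.eq_smul_antisymmetrize]
    exact Submodule.smul_mem _ _ (antisymmetrize_mul_antisymmetrize_mem_stairLower hs.2 r)

theorem stairEval_xComponent_mem {f : PolyXY n} (hI : f ∈ invIdeal n) (hf : IsAltPoly n f)
    (d : ℕ) : stairEval n (xComponent n d f) ∈ stairFiltration n d := by
  have h := Submodule.smul_mem _ (n.factorial : ℂ)⁻¹ (antisymmetrize_mem_stairLower hI)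
  rw [← hf.eq_smul_antisymmetrize] at h
  exact (Submodule.mem_iInf _).1 h d

theorem stairEval_xComponent_mem_span {κ : Type*} {E : κ → Fin n → ℕ × ℕ} {f : PolyXY n}
    (hf : f ∈ Submodule.span ℂ (Set.range fun k => biVandermonde n (E k))) (d : ℕ) :
    stairEval n (xComponent n d f) ∈
      Submodule.span ℂ (Set.range fun k => stairEval n (biVandermonde n (E k))) := by
  refine Submodule.span_le (p := (Submodule.span ℂ _).comap (stairEval n ∘ₗ xComponent n d)).2
    ?_ hf
  rintro _ ⟨k, rfl⟩
  change stairEval n (xComponent n d (biVandermonde n (E k))) ∈ Submodule.span ℂ _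
  rw [xComponent_biVandermonde]
  split_ifs
  · exact Submodule.subset_span ⟨k, rfl⟩
  · exact (map_zero (stairEval n)).symm ▸ Submodule.zero_mem _

theorem stairFiltration_le_span {κ : Type*} {E : κ → Fin n → ℕ × ℕ}
    (hE : (antisymmetrize n).range ≤ (invIdeal n).restrictScalars ℂ ⊔
      Submodule.span ℂ (Set.range fun k => biVandermonde n (E k))) (d : ℕ) :
    stairFiltration n d ≤
      Submodule.span ℂ (Set.range fun k => stairEval n (biVandermonde n (E k))) := by
  induction d with
  | zero => simp [stairFiltration, xFiltration]
  | succ d ih =>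
    rw [stairFiltration, xFiltration, Submodule.map_span_le]
    rintro _ ⟨e, he, rfl⟩
    obtain ⟨g, hg, h, hh, hgh⟩ := Submodule.mem_sup.1 (hE ⟨pairMonomial e, rfl⟩)
    have hgalt : IsAltPoly n g := by
      rw [isAltPoly_iff_mem_range, eq_sub_of_add_eq hgh]
      exact Submodule.sub_mem _ ⟨_, rfl⟩ (span_biVandermonde_le_range hh)
    have hcomp : antisymmetrize n (pairMonomial e) =
        xComponent n (xDegree e) g + xComponent n (xDegree e) h := by
      rw [← map_add, hgh, antisymmetrize_pairMonomial, xComponent_biVandermonde, if_pos rfl]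
    rw [LinearMap.comp_apply, hcomp, map_add]
    refine Submodule.add_mem _ (ih ?_) (stairEval_xComponent_mem_span hh _)
    exact Submodule.map_mono (xFiltration_mono (Nat.lt_succ_iff.1 he))
      (stairEval_xComponent_mem hg hgalt _)

theorem map_stairEval_range_antisymmetrize_le {κ : Type*} {E : κ → Fin n → ℕ × ℕ}
    (hE : (antisymmetrize n).range ≤ (invIdeal n).restrictScalars ℂ ⊔
      Submodule.span ℂ (Set.range fun k => biVandermonde n (E k))) :
    (antisymmetrize n).range.map (stairEval n) ≤
      Submodule.span ℂ (Set.range fun k => stairEval n (biVandermonde n (E k))) := by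
  rw [range_antisymmetrize, Submodule.map_span_le]
  rintro _ ⟨e, rfl⟩
  exact stairFiltration_le_span hE _ (stairEval_biVandermonde_mem (Nat.lt_succ_self _))

end LowerDegree

section StairMonomials

variable {n : ℕ}

/-- The weakly increasing sequence `i + a (n - 1 - i)` attached to the area sequence of a Dyck
path. -/
def stairIndex (a : Fin n → ℕ) (i : Fin n) : ℕ := i + a i.rev

/-- The polynomial `δ(x) * ∏ i, y_i ^ a (n - 1 - i)`, where `δ` is the indicator function of
`(0, …, n - 1)` on `{0, …, n - 1}^n`. -/
def stairPeak (a : Fin n → ℕ) : PolyXY n :=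
  (∏ i, Polynomial.aeval (X (Sum.inl i))
    (Lagrange.basis Finset.univ (fun k : Fin n => ((k : ℕ) : ℂ)) i)) *
      ∏ i, X (Sum.inr i) ^ a i.rev

theorem IsDyckArea.le {a : Fin n → ℕ} (h : IsDyckArea a) (i : Fin n) : a i ≤ i := by
  obtain ⟨k, hk⟩ := i
  induction k with
  | zero => exact (h.1 _ rfl).le
  | succ k ih => exact (h.2 ⟨k, by omega⟩ _ rfl).trans (Nat.succ_le_succ (ih _))

instance finite_isDyckArea : Finite {a : Fin n → ℕ // IsDyckArea a} :=
  Finite.of_injective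
    (fun π (i : Fin n) => (⟨π.1 i, (π.2.le i).trans_lt i.isLt⟩ : Fin n)) fun _ _ h =>
      Subtype.ext (funext fun i => congrArg Fin.val (congrFun h i))

theorem stairIndex_lt {a : Fin n → ℕ} (h : IsDyckArea a) (i : Fin n) : stairIndex a i < n := by
  have := h.le i.rev
  rw [Fin.val_rev] at this
  rw [stairIndex]
  omega

theorem monotone_stairIndex {a : Fin n → ℕ} (h : IsDyckArea a) : Monotone (stairIndex a) := by
  rcases n with _ | n
  · exact Subsingleton.monotone _
  refine Fin.monotone_iff_le_succ.2 fun i => ?_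
  have := h.2 i.succ.rev i.castSucc.rev (by simp [Fin.val_rev]; omega)
  simp only [stairIndex, Fin.val_succ, Fin.val_castSucc]
  omega

theorem stairIndex_injective : Function.Injective (stairIndex (n := n)) := fun a b h =>
  funext fun i => by simpa [stairIndex] using congrFun h i.rev

theorem eq_of_monotone_of_sum_single_eq {α : Type*} [LinearOrder α] {f g : Fin n → α}
    (hf : Monotone f) (hg : Monotone g)
    (h : ∑ i, Finsupp.single (f i) 1 = ∑ i, Finsupp.single (g i) 1) : f = g := by
  have hsum (f : Fin n → α) :
      ∑ i, Finsupp.single (f i) 1 = Multiset.toFinsupp (Multiset.ofList (List.ofFn f)) := by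
    rw [← Fin.univ_val_map, ← Multiset.sum_map_singleton (Finset.univ.val.map f),
      Multiset.map_map, map_multiset_sum, Multiset.map_map]
    simp [Finset.sum]
  rw [hsum, hsum, EmbeddingLike.apply_eq_iff_eq, Multiset.coe_eq_coe] at h
  exact List.ofFn_injective (h.eq_of_sortedLE hf.sortedLE_ofFn hg.sortedLE_ofFn)

theorem linearIndependent_prod_X_stairIndex :
    LinearIndependent ℂ fun π : {a : Fin n → ℕ // IsDyckArea a} =>
      ∏ i, (X (stairIndex π.1 i) : MvPolynomial ℕ ℂ) := by
  have hinj : Function.Injective fun π : {a : Fin n → ℕ // IsDyckArea a} =>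
      ∑ i, Finsupp.single (stairIndex π.1 i) 1 := fun π ρ h =>
    Subtype.ext (stairIndex_injective (eq_of_monotone_of_sum_single_eq
      (monotone_stairIndex π.2) (monotone_stairIndex ρ.2) h))
  have hmon (π : {a : Fin n → ℕ // IsDyckArea a}) :
      ∏ i, (X (stairIndex π.1 i) : MvPolynomial ℕ ℂ) =
        monomial (∑ i, Finsupp.single (stairIndex π.1 i) 1) 1 :=
    (monomial_sum_one _ _).symm
  simpa only [hmon, coe_basisMonomials, Function.comp_def] using
    (basisMonomials ℕ ℂ).linearIndependent.comp _ hinj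

theorem eval_lagrangeBasis (i k : Fin n) :
    (Lagrange.basis Finset.univ (fun k : Fin n => ((k : ℕ) : ℂ)) i).eval ((k : ℕ) : ℂ) =
      if k = i then 1 else 0 := by
  have hinj : Function.Injective fun k : Fin n => ((k : ℕ) : ℂ) :=
    Nat.cast_injective.comp Fin.val_injective
  split_ifs with h
  · exact h ▸ Lagrange.eval_basis_self hinj.injOn (Finset.mem_univ k)
  · exact Lagrange.eval_basis_of_ne (v := fun k : Fin n => ((k : ℕ) : ℂ)) (Ne.symm h)
      (Finset.mem_univ k)

theorem evalX_stairPeak (a : Fin n → ℕ) (σ : Equiv.Perm (Fin n)) :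
    evalX (fun i => (σ i : ℕ)) (stairPeak a) =
      if σ = 1 then ∏ i, X i ^ a i.rev else 0 := by
  have hfactor (i : Fin n) : evalX (fun i => (σ i : ℕ)) (Polynomial.aeval (X (Sum.inl i))
      (Lagrange.basis Finset.univ (fun k : Fin n => ((k : ℕ) : ℂ)) i)) =
        if σ i = i then 1 else 0 := by
    have hX : evalX (fun i => (σ i : ℕ)) (X (Sum.inl i)) = algebraMap ℂ _ ((σ i : ℕ) : ℂ) := by
      simp [evalX]
    rw [← Polynomial.aeval_algHom_apply, hX, Polynomial.aeval_algebraMap_apply,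
      Polynomial.coe_aeval_eq_eval, eval_lagrangeBasis, apply_ite (algebraMap ℂ _), map_one,
      map_zero]
  have hiff : (∀ i, σ i = i) ↔ σ = 1 := ⟨fun h => Equiv.ext h, fun h i => by rw [h]; rfl⟩
  rw [stairPeak, map_mul, map_prod]
  simp only [hfactor, Finset.prod_ite_zero, Finset.mem_univ, true_imp_iff, hiff, ite_mul]
  simp [evalX]

theorem stairEval_antisymmetrize_stairPeak {a : Fin n → ℕ} (ha : IsDyckArea a) :
    stairEval n (antisymmetrize n (stairPeak a)) = ∏ i, X (stairIndex a i) := by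
  have heval (σ : Equiv.Perm (Fin n)) : windowEval (fun i => (σ i : ℕ)) (stairPeak a) =
      if σ = 1 then ∏ i, X (stairIndex a i) else 0 := by
    rw [windowEval, LinearMap.comp_apply, AlgHom.toLinearMap_apply, evalX_stairPeak]
    split_ifs with hσ
    · rw [← mul_one (∏ i : Fin n, (X i : MvPolynomial (Fin n) ℂ) ^ a i.rev),
        windowMap_prod_X_pow_mul _ fun i : Fin n => a i.rev, ← C_1, C_apply, windowMap_monomial]
      refine Finset.prod_congr rfl fun i _ => ?_
      rw [hσ]
      exact if_pos (stairIndex_lt ha i)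
    · exact map_zero _
  rw [stairEval, windowEval_antisymmetrize, Fintype.sum_eq_single 1]
  · simpa using heval 1
  · intro σ hσ
    change _ • windowEval (fun i => (σ i : ℕ)) (stairPeak a) = 0
    rw [heval, if_neg hσ, smul_zero]

theorem natCard_isDyckArea_le {κ : Type*} [Finite κ] {E : κ → Fin n → ℕ × ℕ}
    (hE : (antisymmetrize n).range ≤ (invIdeal n).restrictScalars ℂ ⊔
      Submodule.span ℂ (Set.range fun k => biVandermonde n (E k))) :
    Nat.card {a : Fin n → ℕ // IsDyckArea a} ≤ Nat.card κ := by
  have := Fintype.ofFinite κ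
  have := Fintype.ofFinite {a : Fin n → ℕ // IsDyckArea a}
  rw [Nat.card_eq_fintype_card, Nat.card_eq_fintype_card]
  have hmem : Set.range (fun π : {a : Fin n → ℕ // IsDyckArea a} =>
      ∏ i, (X (stairIndex π.1 i) : MvPolynomial ℕ ℂ)) ⊆
        Submodule.span ℂ (Set.range fun k => stairEval n (biVandermonde n (E k))) := by
    rintro _ ⟨π, rfl⟩
    exact map_stairEval_range_antisymmetrize_le hE
      ⟨_, ⟨stairPeak π.1, rfl⟩, stairEval_antisymmetrize_stairPeak π.2⟩
  exact (linearIndependent_le_span_aux' _ linearIndependent_prod_X_stairIndex _ hmem).trans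
    (Fintype.card_range_le _)

end StairMonomials

theorem linearIndependent_mk_dyckVandermonde {n : ℕ} :
    LinearIndependent ℂ fun π : {a : Fin n → ℕ // IsDyckArea a} =>
      Ideal.Quotient.mk (invIdeal n) (dyckVandermonde π) := by
  obtain ⟨κ, ρ, hρ, hspan, hli⟩ := exists_linearIndependent' ℂ fun π =>
    Ideal.Quotient.mk (invIdeal n) (dyckVandermonde π)
  have := Finite.of_injective ρ hρ
  have hcard := natCard_isDyckArea_le
    (span_mk_biVandermonde_eq_iff.1 (hspan.trans span_mk_dyckVandermonde))
  have hbij := hρ.bijective_of_nat_card_le hcard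
  exact (linearIndependent_equiv (Equiv.ofBijective ρ hbij)).1 hli

end

/-- The images in `DR_n` of the bivariate Vandermonde determinants `Δ_{X(π)}`,
as `π` ranges over Dyck paths of semilength `n`, form a `ℂ`-vector-space basis
of the ideal `A` of `DR_n` generated by the alternating polynomials: they are
linearly independent and span `A`. -/
theorem biVandermonde_basis_of_altIdeal (n : ℕ) (hn : 1 ≤ n) :
    LinearIndependent ℂ (fun π : {a : Fin n → ℕ // IsDyckArea a} =>
      Ideal.Quotient.mk (invIdeal n)
        (biVandermonde n (fun i => (dinvSeq π.1 i, π.1 i)))) ∧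
    Submodule.span ℂ (Set.range (fun π : {a : Fin n → ℕ // IsDyckArea a} =>
      Ideal.Quotient.mk (invIdeal n)
        (biVandermonde n (fun i => (dinvSeq π.1 i, π.1 i))))) =
      Submodule.restrictScalars ℂ (altIdeal n) :=
  ⟨linearIndependent_mk_dyckVandermonde, span_mk_dyckVandermonde⟩
end

section
/- For any Dyck path π of semilength n, the n pairs (d_1,a_1),…,(d_n,a_n) formed from its dinv sequence and area sequence are pairwise distinct. -/
theorem card_filter_lt_and_lt_of_lt {ι : Type*} [Preorder ι] [Fintype ι]
    [DecidableLT ι] {p : ι → Prop} [DecidablePred p] {i j : ι} (hij : i < j) (hj : p j) :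
    (Finset.univ.filter (fun k => j < k ∧ p k)).card <
      (Finset.univ.filter (fun k => i < k ∧ p k)).card := by
  refine Finset.card_lt_card ((Finset.ssubset_iff_of_subset ?_).mpr ⟨j, ?_, ?_⟩)
  · exact Finset.monotone_filter_right _ fun _ _ hk => hk.imp_left hij.trans
  · simp [hij, hj]
  · simp

theorem strictAntiOn_dinvSeq_fiber {n : ℕ} (a : Fin n → ℕ) (v : ℕ) :
    StrictAntiOn (dinvSeq a) (a ⁻¹' {v}) := by
  rintro i rfl j (hj : a j = a i) hij
  unfold dinvSeq
  rw [hj]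
  exact card_filter_lt_and_lt_of_lt hij (Or.inl hj)

theorem dinv_area_pairs_distinct_general {n : ℕ} (a : Fin n → ℕ) :
    Function.Injective (fun i : Fin n => (dinvSeq a i, a i)) := by
  intro i j hij
  obtain ⟨hdinv, harea⟩ := Prod.mk.inj hij
  exact (strictAntiOn_dinvSeq_fiber a (a j)).injOn harea rfl hdinv

/-- The (dinv, area) pairs of a Dyck path are pairwise distinct. -/
theorem dinv_area_pairs_distinct {n : ℕ} (a : Fin n → ℕ) (ha : IsDyckArea a) :
    Function.Injective (fun i : Fin n => (dinvSeq a i, a i)) :=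
  dinv_area_pairs_distinct_general a
end

section
/- For any Dyck path π of semilength n, the bivariate Vandermonde determinant Δ_{X(π)}(x,y), where X(π) = ((d_1,a_1),…,(d_n,a_n)) is the tuple of (dinv, area) pairs of π, is a nonzero polynomial in ℂ[x_1,…,x_n,y_1,…,y_n]. -/
open MvPolynomial

/-!
Each row of the matrix has its own variables `x_i, y_i`, so a term of the Leibniz expansion of the
determinant records, for every row, which exponent pair was used there. If the pairs are distinct,
this recovers the permutation: distinct permutations give distinct monomials and nothing cancels.
The pairs `(d_i, a_i)` are distinct because, among indices with the same area, every `j` counted by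
`d_i` for a later `i` is also counted for an earlier one, which in addition counts the later index.
-/

section MonomialDet

variable {ι σ R : Type*} [Fintype ι] [DecidableEq ι] [CommRing R]

theorem det_monomial_eq_sum (e : ι → ι → σ →₀ ℕ) :
    (Matrix.of fun i j => monomial (e i j) (1 : R)).det =
      ∑ τ : Equiv.Perm ι, monomial (∑ i, e (τ i) i) ((τ.sign : ℤ) : R) := by
  rw [Matrix.det_apply']
  refine Finset.sum_congr rfl fun τ _ => ?_
  simp only [Matrix.of_apply]
  rw [← monomial_sum_one, ← map_intCast (C : R →+* MvPolynomial σ R), C_mul_monomial, mul_one]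

theorem coeff_det_monomial (e : ι → ι → σ →₀ ℕ) (τ : Equiv.Perm ι)
    (hτ : ∀ ρ : Equiv.Perm ι, ∑ i, e (ρ i) i = ∑ i, e (τ i) i → ρ = τ) :
    coeff (∑ i, e (τ i) i) (Matrix.of fun i j => monomial (e i j) (1 : R)).det =
      ((τ.sign : ℤ) : R) := by
  classical
  rw [det_monomial_eq_sum, coeff_sum, Finset.sum_eq_single_of_mem τ (Finset.mem_univ τ)]
  · rw [coeff_monomial, if_pos rfl]
  · intro ρ _ hρ
    rw [coeff_monomial, if_neg (mt (hτ ρ) hρ)]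

theorem det_monomial_ne_zero [Nontrivial R] (e : ι → ι → σ →₀ ℕ) (τ : Equiv.Perm ι)
    (hτ : ∀ ρ : Equiv.Perm ι, ∑ i, e (ρ i) i = ∑ i, e (τ i) i → ρ = τ) :
    (Matrix.of fun i j => monomial (e i j) (1 : R)).det ≠ 0 := by
  intro hdet
  have hsign : ((τ.sign : ℤ) : R) = 0 := by
    rw [← coeff_det_monomial e τ hτ, hdet, coeff_zero]
  exact (τ.sign.isUnit.map (Int.castRingHom R)).ne_zero hsign

end MonomialDet

section BiExponent

variable {ι κ : Type*}

/-- The exponent vector of the monomial `x_i ^ p.1 * y_i ^ p.2`, with `x_i` indexed by `Sum.inl i`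
and `y_i` by `Sum.inr i`; these are the exponents of the entries of a bivariate Vandermonde
matrix. -/
noncomputable def biExponent (i : ι) (p : ℕ × ℕ) : ι ⊕ ι →₀ ℕ :=
  Finsupp.single (Sum.inl i) p.1 + Finsupp.single (Sum.inr i) p.2

theorem monomial_biExponent {R : Type*} [CommSemiring R] (i : ι) (p : ℕ × ℕ) :
    monomial (biExponent i p) (1 : R) = X (Sum.inl i) ^ p.1 * X (Sum.inr i) ^ p.2 := by
  simp only [biExponent, X_pow_eq_monomial, monomial_mul, mul_one]

variable [Fintype κ] (E : κ → ℕ × ℕ)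

theorem sum_biExponent_apply_inl (τ : κ ≃ ι) (i : ι) :
    (∑ j, biExponent (τ j) (E j)) (Sum.inl i) = (E (τ.symm i)).1 := by
  classical
  simp [biExponent, Finsupp.finsetSum_apply, Finsupp.single_apply, ← Equiv.eq_symm_apply]

theorem sum_biExponent_apply_inr (τ : κ ≃ ι) (i : ι) :
    (∑ j, biExponent (τ j) (E j)) (Sum.inr i) = (E (τ.symm i)).2 := by
  classical
  simp [biExponent, Finsupp.finsetSum_apply, Finsupp.single_apply, ← Equiv.eq_symm_apply]

theorem sum_biExponent_injective {E : κ → ℕ × ℕ} (hE : Function.Injective E) :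
    Function.Injective fun τ : κ ≃ ι => ∑ j, biExponent (τ j) (E j) := by
  intro τ ρ (h : ∑ j, biExponent (τ j) (E j) = ∑ j, biExponent (ρ j) (E j))
  have hpairs (i : ι) : E (τ.symm i) = E (ρ.symm i) := by
    ext
    · rw [← sum_biExponent_apply_inl, h, sum_biExponent_apply_inl]
    · rw [← sum_biExponent_apply_inr, h, sum_biExponent_apply_inr]
  exact Equiv.symm_bijective.injective (Equiv.ext fun i => hE (hpairs i))

end BiExponent

theorem biVandermonde_ne_zero_of_injective {n : ℕ} {E : Fin n → ℕ × ℕ}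
    (hE : Function.Injective E) : biVandermonde n E ≠ 0 := by
  simp only [biVandermonde, ← monomial_biExponent]
  exact det_monomial_ne_zero (fun i j => biExponent i (E j)) 1
    fun _ h => sum_biExponent_injective hE h

section Dinv

variable {n : ℕ} (a : Fin n → ℕ)

theorem dinvSeq_strictAntiOn_fiber (m : ℕ) : StrictAntiOn (dinvSeq a) (a ⁻¹' {m}) := by
  intro i hi j hj hij
  have hji : a j = a i := hj.trans hi.symm
  refine Finset.card_lt_card ((Finset.ssubset_iff_of_subset fun k hk => ?_).2 ⟨j, ?_, ?_⟩)
  · simp only [Finset.mem_filter_univ, hji] at hk ⊢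
    exact ⟨hij.trans hk.1, hk.2⟩
  · simp [hij, hji]
  · simp

theorem dinvSeq_area_injective : Function.Injective fun i => (dinvSeq a i, a i) := by
  intro i j h
  obtain ⟨hdinv, harea⟩ := Prod.mk.inj h
  exact (dinvSeq_strictAntiOn_fiber a (a j)).injOn harea rfl hdinv

end Dinv

theorem biVandermonde_dyck_ne_zero_general {n : ℕ} (a : Fin n → ℕ) :
    biVandermonde n (fun i => (dinvSeq a i, a i)) ≠ 0 :=
  biVandermonde_ne_zero_of_injective (dinvSeq_area_injective a)

/-- For a Dyck path with area sequence `a` and dinv sequence `d`, the bivariate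
Vandermonde determinant `Δ_{X(π)}` with `X(π) = ((d_1,a_1),…,(d_n,a_n))` is a
nonzero polynomial. -/
theorem biVandermonde_dyck_ne_zero {n : ℕ} (a : Fin n → ℕ) (ha : IsDyckArea a) :
    biVandermonde n (fun i => (dinvSeq a i, a i)) ≠ 0 :=
  biVandermonde_dyck_ne_zero_general a
end

section
/- Let π and π′ be two Dyck paths of semilength n with respective area sequences a(π), a(π′) and dinv sequences d(π), d(π′). If the underlying set { (d_i(π), a_i(π)) : 1 ≤ i ≤ n } equals the underlying set { (d_i(π′), a_i(π′)) : 1 ≤ i ≤ n }, then π = π′ (equivalently, a(π) = a(π′)). -/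
/-!
For a value `y`, call the indices `j` with `a j ∈ {y, y - 1}` the band of `y`. An index `i` with
`a i = y` lies in its own band, and `dinvSeq a i` is the number of band members after `i`; so once
the size of the band is known, `dinvSeq a i` tells the rank of `i` in the band. In particular
distinct indices give distinct pairs, so the set of pairs determines their multiset and hence the
size of every band.

At the first index `p` where `a` and `a'` differ, say `a p < y = a' p`, the pair of `a'` at `p` is
the pair of `a` at some `i`, and `i` has `c` band members before it, where `c` is the number of
common band members before `p`. This forces `p < i`. But `a`, rising by at most one per step, takes
the value `y - 1` at some index in `[p, i)`, which makes the rank of `i` larger than `c`.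
-/

section DyckDinv

open scoped Finset

theorem card_filter_lt_lt_of_mem {α : Type*} [Preorder α] [DecidableLT α] {s : Finset α}
    {p k i : α} (hk : k ∈ s) (hpk : p ≤ k) (hki : k < i) :
    #{j ∈ s | j < p} < #{j ∈ s | j < i} := by
  refine Finset.card_lt_card <| (Finset.ssubset_iff_of_subset ?_).2 ⟨k, ?_, ?_⟩
  · exact Finset.monotone_filter_right s fun j _ hj ↦ hj.trans (hpk.trans_lt hki)
  · exact Finset.mem_filter.2 ⟨hk, hki⟩
  · exact fun hkp ↦ (Finset.mem_filter.1 hkp).2.not_ge hpk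

theorem strictMonoOn_card_filter_lt {α : Type*} [Preorder α] [DecidableLT α] (s : Finset α) :
    StrictMonoOn (fun i ↦ #{j ∈ s | j < i}) s :=
  fun _ hi _ _ hij ↦ card_filter_lt_lt_of_mem hi le_rfl hij

theorem card_filter_lt_add_card_filter_gt_add_one {α : Type*} [LinearOrder α] {s : Finset α}
    {i : α} (hi : i ∈ s) : #{j ∈ s | j < i} + #{j ∈ s | i < j} + 1 = #s := by
  have not_lt_eq_insert : {j ∈ s | ¬ j < i} = insert i {j ∈ s | i < j} := by
    ext j
    grind
  rw [← Finset.card_filter_add_card_filter_not (s := s) (· < i), not_lt_eq_insert,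
    Finset.card_insert_of_notMem (by simp), add_assoc]

theorem exists_add_one_eq_of_covBy_le_add_one {α β : Type*} [PartialOrder α] [WellFoundedLT α]
    [IsStronglyCoatomic α] [LinearOrder β] [Add β] [One β] [SuccAddOrder β] {f : α → β}
    (hf : ∀ i j, i ⋖ j → f j ≤ f i + 1) {p i : α} {y : β} (hpi : p < i) (hp : f p < y)
    (hi : y ≤ f i) : ∃ k, p ≤ k ∧ k < i ∧ f k + 1 = y := by
  induction i using WellFoundedLT.induction with
  | ind i ih =>
    obtain ⟨k, hpk, hki⟩ := exists_le_covBy_of_lt hpi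
    rcases lt_or_ge (f k) y with hky | hky
    · exact ⟨k, hpk, hki.lt, (Order.add_one_le_of_lt hky).antisymm (hi.trans (hf k i hki))⟩
    · have hpk : p < k := hpk.lt_of_ne (by rintro rfl; exact hp.not_ge hky)
      obtain ⟨l, hpl, hlk, hl⟩ := ih k hki.lt hpk hky
      exact ⟨l, hpl, hlk.trans hki.lt, hl⟩

theorem exists_equiv_of_range_eq {α β γ : Type*} {f : α → γ} {g : β → γ}
    (hf : Function.Injective f) (hg : Function.Injective g) (h : Set.range f = Set.range g) :
    ∃ e : α ≃ β, ∀ i, g (e i) = f i :=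
  ⟨(Equiv.ofInjective f hf).trans ((Equiv.setCongr h).trans (Equiv.ofInjective g hg).symm),
    fun i ↦ by simp [Equiv.apply_ofInjective_symm]⟩

variable {n : ℕ}

/-- The indices at which `a` takes the value `y` or `y - 1`. The second condition is written
`a j + 1 = y`, as in `dinvSeq`, so that it is void for `y = 0`. -/
def band (a : Fin n → ℕ) (y : ℕ) : Finset (Fin n) := {j | a j = y ∨ a j + 1 = y}

@[simp]
theorem mem_band {a : Fin n → ℕ} {y : ℕ} {j : Fin n} :
    j ∈ band a y ↔ a j = y ∨ a j + 1 = y := by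
  simp [band]

theorem dinvSeq_eq_card_filter_band (a : Fin n → ℕ) (i : Fin n) :
    dinvSeq a i = #{j ∈ band a (a i) | i < j} := by
  simp only [dinvSeq, band, Finset.filter_filter, and_comm]

theorem card_band_before_add_dinvSeq_add_one (a : Fin n → ℕ) (i : Fin n) :
    #{j ∈ band a (a i) | j < i} + dinvSeq a i + 1 = #(band a (a i)) := by
  rw [dinvSeq_eq_card_filter_band]
  exact card_filter_lt_add_card_filter_gt_add_one (by simp)

theorem injective_dinvSeq_prodMk (a : Fin n → ℕ) :
    Function.Injective fun i ↦ (dinvSeq a i, a i) := by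
  intro i j hij
  obtain ⟨hdinv, harea⟩ := Prod.mk.inj hij
  have rank_i := card_band_before_add_dinvSeq_add_one a i
  have rank_j := card_band_before_add_dinvSeq_add_one a j
  rw [harea] at rank_i
  exact (strictMonoOn_card_filter_lt (band a (a j))).injOn (by simp [harea]) (by simp)
    (by omega)

theorem card_band_eq_of_equiv {a a' : Fin n → ℕ} (σ : Equiv.Perm (Fin n))
    (h : ∀ i, a' (σ i) = a i) (y : ℕ) : #(band a y) = #(band a' y) :=
  Finset.card_equiv σ fun i ↦ by simp [h]

theorem filter_lt_band_congr {a a' : Fin n → ℕ} {p : Fin n} (h : ∀ j < p, a j = a' j) (y : ℕ) :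
    {j ∈ band a y | j < p} = {j ∈ band a' y | j < p} := by
  ext j
  simp +contextual [h]

theorem le_of_dinvSeq_area_equiv {a a' : Fin n → ℕ}
    (ha : ∀ i j : Fin n, (j : ℕ) = (i : ℕ) + 1 → a j ≤ a i + 1) (σ : Equiv.Perm (Fin n))
    (hdinv : ∀ i, dinvSeq a' (σ i) = dinvSeq a i) (harea : ∀ i, a' (σ i) = a i)
    {p : Fin n} (hp : ∀ j < p, a j = a' j) : a' p ≤ a p := by
  by_contra! hlt
  obtain ⟨i, rfl⟩ : ∃ i, σ i = p := σ.surjective p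
  have rank_eq : #{j ∈ band a (a i) | j < i} = #{j ∈ band a (a i) | j < σ i} := by
    have rank_i := card_band_before_add_dinvSeq_add_one a i
    have rank_p := card_band_before_add_dinvSeq_add_one a' (σ i)
    rw [hdinv, harea, ← filter_lt_band_congr hp, ← card_band_eq_of_equiv σ harea] at rank_p
    omega
  rw [harea] at hlt
  rcases lt_trichotomy i (σ i) with i_lt | i_eq | lt_i
  · exact (card_filter_lt_lt_of_mem (by simp) le_rfl i_lt).ne rank_eq
  · exact hlt.ne (congrArg a i_eq.symm)
  · have step (j k : Fin n) (hjk : j ⋖ k) : a k ≤ a j + 1 :=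
      ha j k (Nat.covBy_iff_add_one_eq.1 (Fin.covBy_iff.1 hjk)).symm
    obtain ⟨k, le_k, k_lt, hk⟩ := exists_add_one_eq_of_covBy_le_add_one step lt_i hlt le_rfl
    exact (card_filter_lt_lt_of_mem (mem_band.2 (.inr hk)) le_k k_lt).ne' rank_eq

theorem dyck_eq_of_dinv_area_set_eq_general (a a' : Fin n → ℕ)
    (ha : ∀ i j : Fin n, (j : ℕ) = (i : ℕ) + 1 → a j ≤ a i + 1)
    (ha' : ∀ i j : Fin n, (j : ℕ) = (i : ℕ) + 1 → a' j ≤ a' i + 1)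
    (h : Set.range (fun i : Fin n ↦ (dinvSeq a i, a i)) =
         Set.range (fun i : Fin n ↦ (dinvSeq a' i, a' i))) :
    a = a' := by
  obtain ⟨σ, hσ⟩ := exists_equiv_of_range_eq (injective_dinvSeq_prodMk a)
    (injective_dinvSeq_prodMk a') h
  have hdinv (i : Fin n) : dinvSeq a' (σ i) = dinvSeq a i := (Prod.mk.inj (hσ i)).1
  have harea (i : Fin n) : a' (σ i) = a i := (Prod.mk.inj (hσ i)).2
  funext p
  induction p using WellFoundedLT.induction with
  | ind p ih =>
    refine le_antisymm ?_ (le_of_dinvSeq_area_equiv ha σ hdinv harea ih)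
    exact le_of_dinvSeq_area_equiv ha' σ.symm (fun i ↦ by simp [← hdinv])
      (fun i ↦ by simp [← harea]) fun j hj ↦ (ih j hj).symm

end DyckDinv

/-- Two Dyck paths with the same underlying set of (dinv, area) pairs coincide. -/
theorem dyck_eq_of_dinv_area_set_eq {n : ℕ} (a a' : Fin n → ℕ)
    (ha : IsDyckArea a) (ha' : IsDyckArea a')
    (h : Set.range (fun i : Fin n => (dinvSeq a i, a i)) =
         Set.range (fun i : Fin n => (dinvSeq a' i, a' i))) :
    a = a' :=
  dyck_eq_of_dinv_area_set_eq_general a a' ha.2 ha'.2 h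
end
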